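/- arXiv:1009.4379 — 9 statements merged into one kernel-verified Lean document; each statement's English description precedes it below -/
import Mathlib

section
/- Let Γ be a group. If Γ has a projective unitary representation on some complex Hilbert space which is both irreducible and projectively faithful, then there exists a group Δ admitting a faithful irreducible unitary representation on a complex Hilbert space such that Δ/Z(Δ) is isomorphic to Γ. -/
/-- A projective unitary representation: a map into the unitary operators sending `1` to `id`
whose composition with the quotient by the circle is a homomorphism. -/
def IsProjUnitaryRep {G : Type*} [Group G] {H : Type*} [NormedAddCommGroup H]
    [InnerProductSpace ℂ H] [CompleteSpace H] (π : G → (H →L[ℂ] H)) : Prop :=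
  (∀ x, π x ∈ unitary (H →L[ℂ] H)) ∧ π 1 = 1 ∧
    ∀ x y, ∃ z : Circle, π x * π y = (z : ℂ) • π (x * y)

/-- The projective kernel of a projective representation. -/
def ProjKer {G : Type*} [Group G] {H : Type*} [NormedAddCommGroup H]
    [InnerProductSpace ℂ H] [CompleteSpace H] (π : G → (H →L[ℂ] H)) : Set G :=
  {x | ∃ z : Circle, π x = (z : ℂ) • (1 : H →L[ℂ] H)}

/-- Projective faithfulness. -/
def PFaithful {G : Type*} [Group G] {H : Type*} [NormedAddCommGroup H]
    [InnerProductSpace ℂ H] [CompleteSpace H] (π : G → (H →L[ℂ] H)) : Prop :=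
  ∀ x, x ∈ ProjKer π → x = 1

/-- Irreducibility: the only closed invariant subspaces are `⊥` and `⊤`. -/
def IsIrreducibleRep {G : Type*} {H : Type*} [NormedAddCommGroup H]
    [InnerProductSpace ℂ H] [CompleteSpace H] (π : G → (H →L[ℂ] H)) : Prop :=
  ∀ K : Submodule ℂ H, IsClosed (K : Set H) → (∀ x, ∀ v ∈ K, π x v ∈ K) → K = ⊥ ∨ K = ⊤

/-- An (ordinary) unitary representation. -/
def IsUnitaryRep {G : Type*} [Group G] {H : Type*} [NormedAddCommGroup H]
    [InnerProductSpace ℂ H] [CompleteSpace H] (π : G → (H →L[ℂ] H)) : Prop :=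
  (∀ x, π x ∈ unitary (H →L[ℂ] H)) ∧ π 1 = 1 ∧ ∀ x y, π (x * y) = π x * π y

/-- A multiplier (2-cocycle) with values in the circle group. -/
def IsMultiplier {G : Type*} [Group G] (ζ : G → G → Circle) : Prop :=
  (∀ x, ζ 1 x = 1) ∧ (∀ x, ζ x 1 = 1) ∧
    ∀ x y z, ζ x y * ζ (x * y) z = ζ x (y * z) * ζ y z

/-- A normalised multiplier. -/
def IsNormalised {G : Type*} [Group G] (ζ : G → G → Circle) : Prop :=
  ∀ x : G, ζ x x⁻¹ = 1

/-- A ζ-representation of `G`. -/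
def IsZetaRep {G : Type*} [Group G] {H : Type*} [NormedAddCommGroup H]
    [InnerProductSpace ℂ H] [CompleteSpace H] (ζ : G → G → Circle)
    (π : G → (H →L[ℂ] H)) : Prop :=
  (∀ x, π x ∈ unitary (H →L[ℂ] H)) ∧ π 1 = 1 ∧
    ∀ x y, π x * π y = ((ζ x y : ℂ)) • π (x * y)

/-- A ζ-representation of a subgroup `N` of `G` (with respect to the restriction of ζ). -/
def IsZetaRepOn {G : Type*} [Group G] {H : Type*} [NormedAddCommGroup H]
    [InnerProductSpace ℂ H] [CompleteSpace H] (ζ : G → G → Circle) (N : Subgroup G)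
    (σ : N → (H →L[ℂ] H)) : Prop :=
  (∀ x, σ x ∈ unitary (H →L[ℂ] H)) ∧ σ 1 = 1 ∧
    ∀ x y : N, σ x * σ y = ((ζ (x : G) (y : G) : ℂ)) • σ (x * y)

open scoped Classical in
/-- The conjugate `σ^γ` of a projective representation `σ` of a (normal) subgroup `N`:
`σ^γ(x) = ζ(γ,x)·ζ(γx,γ⁻¹)·σ(γxγ⁻¹)`. -/
noncomputable def conjRep {G : Type*} [Group G] {H : Type*} [NormedAddCommGroup H]
    [InnerProductSpace ℂ H] [CompleteSpace H] (ζ : G → G → Circle) (N : Subgroup G)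
    (σ : N → (H →L[ℂ] H)) (γ : G) (x : N) : H →L[ℂ] H :=
  if h : γ * (x : G) * γ⁻¹ ∈ N then
    ((ζ γ (x : G) : ℂ) * (ζ (γ * (x : G)) γ⁻¹ : ℂ)) • σ ⟨γ * (x : G) * γ⁻¹, h⟩
  else 1

/-- `σ` is Γ-P-faithful: the projective Γ-kernel
`{x ∈ N : ∃ z ∈ T, σ^γ(x) = z·id for all γ}` is trivial. -/
def GammaPFaithful {G : Type*} [Group G] {H : Type*} [NormedAddCommGroup H]
    [InnerProductSpace ℂ H] [CompleteSpace H] (ζ : G → G → Circle) (N : Subgroup G)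
    (σ : N → (H →L[ℂ] H)) : Prop :=
  ∀ x : N, (∃ z : Circle, ∀ γ : G, conjRep ζ N σ γ x = (z : ℂ) • (1 : H →L[ℂ] H)) → x = 1

/-- A finite foot of `G`: a finite minimal (nontrivial) normal subgroup. -/
def IsFiniteFoot {G : Type*} [Group G] (N : Subgroup G) : Prop :=
  N.Normal ∧ N ≠ ⊥ ∧ (∀ M : Subgroup G, M.Normal → M ≠ ⊥ → M ≤ N → M = N) ∧ Finite N

/-- The minisocle: the subgroup generated by all finite feet. -/
def minisocle (G : Type*) [Group G] : Subgroup G :=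
  ⨆ (N : Subgroup G) (_ : IsFiniteFoot N), N

/-- Property (Fab): the normal subgroup generated by any single conjugacy class has finite
abelianisation. -/
def PropertyFab (G : Type*) [Group G] : Prop :=
  ∀ g : G, Finite (Abelianization (Subgroup.normalClosure ({g} : Set G)))

/-!
The projective representation `π` is a homomorphism from `Γ` to the projective unitary group
`U(H) / T`, with kernel `Pker(π)`. Take for `Δ` the preimage in `U(H)` of its image, acting on `H`
by inclusion; then `Δ / T` is the image, that is, `Γ / Pker(π)`. Since `Δ` contains every `π x`, it
acts irreducibly, and Schur's lemma identifies its centre with `T`.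

Schur's lemma for a normal operator `a` comes from the continuous functional calculus: two distinct
points of the spectrum would give nonzero operators `cfc f a`, `cfc g a` with product zero, both
commuting with everything that commutes with `a` (by Fuglede's theorem), whereas the kernel of an
operator commuting with an irreducible family is `⊥` or `⊤`.
-/

section FunctionalCalculus

variable {𝕜 A : Type*} {p : A → Prop} [RCLike 𝕜] [Ring A] [StarRing A] [TopologicalSpace A]
  [Algebra 𝕜 A] [ContinuousFunctionalCalculus 𝕜 A p] {a : A}

theorem exists_cfc_mul_cfc_eq_zero_of_mem_spectrum (ha : p a) {b c : 𝕜} (hb : b ∈ spectrum 𝕜 a)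
    (hc : c ∈ spectrum 𝕜 a) (hbc : b ≠ c) :
    ∃ f g : 𝕜 → 𝕜, cfc f a ≠ 0 ∧ cfc g a ≠ 0 ∧ cfc f a * cfc g a = 0 := by
  -- `f` lives on the half-space of points closer to `b` than to `c`, and `g` on the opposite one.
  let f : 𝕜 → 𝕜 := fun x => ((max 0 (dist x c - dist x b) : ℝ) : 𝕜)
  let g : 𝕜 → 𝕜 := fun x => ((max 0 (dist x b - dist x c) : ℝ) : 𝕜)
  have hf : Continuous f := by fun_prop
  have hg : Continuous g := by fun_prop
  have hfg : ∀ x, f x * g x = 0 := fun x => by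
    rcases le_total (dist x b) (dist x c) with h | h
    · simp [g, max_eq_left (sub_nonpos.mpr h)]
    · simp [f, max_eq_left (sub_nonpos.mpr h)]
  have hne : ∀ k : 𝕜 → 𝕜, Continuous k → ∀ x ∈ spectrum 𝕜 a, k x ≠ 0 → cfc k a ≠ 0 :=
    fun k hk x hx hkx hzero => hkx <|
      eqOn_of_cfc_eq_cfc (hzero.trans (cfc_const_zero 𝕜 a).symm) hk.continuousOn
        continuousOn_const ha hx
  refine ⟨f, g, hne f hf b hb (by simpa [f] using hbc), hne g hg c hc (by simpa [g] using hbc.symm),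
    ?_⟩
  rw [← cfc_mul f g a hf.continuousOn hg.continuousOn]
  simp only [hfg, cfc_const_zero]

theorem eq_algebraMap_of_spectrum_subset_singleton (ha : p a) {c : 𝕜}
    (hspec : spectrum 𝕜 a ⊆ {c}) : a = algebraMap 𝕜 A c :=
  calc a = cfc (fun x : 𝕜 => x) a := (cfc_id' 𝕜 a).symm
    _ = cfc (fun _ : 𝕜 => c) a := cfc_congr fun _ hb => hspec hb
    _ = algebraMap 𝕜 A c := cfc_const c a

end FunctionalCalculus

section Schur

variable {G H : Type*} [NormedAddCommGroup H] [InnerProductSpace ℂ H] [CompleteSpace H]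
  {π : G → (H →L[ℂ] H)}

theorem IsIrreducibleRep.eq_zero_or_eq_zero_of_mul_eq_zero (hirr : IsIrreducibleRep π)
    {S T : H →L[ℂ] H} (hS : ∀ x, Commute S (π x)) (hST : S * T = 0) : S = 0 ∨ T = 0 := by
  have hinv : ∀ x, ∀ v ∈ S.ker, π x v ∈ S.ker := fun x v hv => by
    have hcomm : S (π x v) = π x (S v) := DFunLike.congr_fun (hS x).eq v
    rw [LinearMap.mem_ker] at hv ⊢
    exact hcomm.trans ((congrArg (π x) hv).trans (map_zero _))
  have hrange : ∀ v, T v ∈ S.ker := fun v => DFunLike.congr_fun hST v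
  rcases hirr S.ker S.isClosed_ker hinv with hker | hker
  · exact Or.inr (ContinuousLinearMap.ext fun v => by simpa [hker] using hrange v)
  · exact Or.inl (ContinuousLinearMap.ext fun v => LinearMap.mem_ker.mp (hker ▸ Submodule.mem_top))

theorem IsIrreducibleRep.exists_eq_algebraMap_of_commute (hirr : IsIrreducibleRep π)
    {a : H →L[ℂ] H} (ha : IsStarNormal a) (hcomm : ∀ x, Commute a (π x)) :
    ∃ c : ℂ, a = algebraMap ℂ (H →L[ℂ] H) c := by
  rcases subsingleton_or_nontrivial H with _ | _
  · exact ⟨0, Subsingleton.elim _ _⟩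
  obtain ⟨c, hc⟩ := spectrum.nonempty a
  refine ⟨c, eq_algebraMap_of_spectrum_subset_singleton ha fun b hb => ?_⟩
  by_contra hbc
  obtain ⟨f, g, hf, hg, hfg⟩ := exists_cfc_mul_cfc_eq_zero_of_mem_spectrum ha hb hc hbc
  have hcomm_cfc : ∀ x, Commute (cfc f a) (π x) := fun x =>
    (hcomm x).cfc (ha.commute_star_right (hcomm x).symm).symm f
  exact (hirr.eq_zero_or_eq_zero_of_mul_eq_zero hcomm_cfc hfg).elim hf hg

end Schur

section ProjectiveUnitary

variable (A : Type*) [Ring A] [StarRing A] [Algebra ℂ A] [StarModule ℂ A]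

/-- The unitary scalars of a complex star algebra: the image of the circle group `T`. -/
def unitaryScalars : Subgroup (unitary A) where
  carrier := {u | ∃ z : Circle, (u : A) = (z : ℂ) • (1 : A)}
  one_mem' := ⟨1, by simp⟩
  mul_mem' := by
    rintro u v ⟨z, hz⟩ ⟨w, hw⟩
    exact ⟨z * w, by simp [hz, hw, smul_smul, mul_comm]⟩
  inv_mem' := by
    rintro u ⟨z, hz⟩
    refine ⟨z⁻¹, ?_⟩
    rw [← Unitary.star_eq_inv, Unitary.coe_star, hz, star_smul, star_one, Circle.coe_inv_eq_conj,
      starRingEnd_apply]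

variable {A}

theorem unitaryScalars_le_center : unitaryScalars A ≤ Subgroup.center (unitary A) := by
  rintro u ⟨z, hz⟩
  exact Subgroup.mem_center_iff.mpr fun v => Subtype.ext (by simp [hz])

instance unitaryScalars_normal : (unitaryScalars A).Normal :=
  ⟨fun u hu v => by
    rwa [Subgroup.mem_center_iff.mp (unitaryScalars_le_center hu) v, mul_inv_cancel_right]⟩

variable (A) in
/-- The projective unitary group `U(A) / T`. -/
abbrev ProjectiveUnitaryGroup : Type _ := unitary A ⧸ unitaryScalars A

theorem ProjectiveUnitaryGroup.mk_eq_mk_iff {u v : unitary A} :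
    (u : ProjectiveUnitaryGroup A) = v ↔ ∃ z : Circle, (v : A) = (z : ℂ) • (u : A) := by
  rw [QuotientGroup.eq]
  refine exists_congr fun z => ⟨fun h => ?_, fun h => ?_⟩
  · calc (v : A) = u * (u⁻¹ * v : unitary A) := by rw [← Submonoid.coe_mul, mul_inv_cancel_left]
      _ = (z : ℂ) • (u : A) := by rw [h, mul_smul_comm, mul_one]
  · rw [Submonoid.coe_mul, h, mul_smul_comm, ← Submonoid.coe_mul, inv_mul_cancel, Submonoid.coe_one]

end ProjectiveUnitary

theorem IsIrreducibleRep.mem_unitaryScalars_of_commute {G H : Type*} [NormedAddCommGroup H]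
    [InnerProductSpace ℂ H] [CompleteSpace H] {π : G → (H →L[ℂ] H)} (hirr : IsIrreducibleRep π)
    {u : unitary (H →L[ℂ] H)} (hcomm : ∀ x, Commute (u : H →L[ℂ] H) (π x)) :
    u ∈ unitaryScalars (H →L[ℂ] H) := by
  rcases subsingleton_or_nontrivial H with _ | _
  · exact ⟨1, Subsingleton.elim _ _⟩
  obtain ⟨c, hc⟩ := hirr.exists_eq_algebraMap_of_commute inferInstance hcomm
  have hnorm : ‖c‖ = 1 := by
    rw [← norm_algebraMap' (H →L[ℂ] H) c, ← hc, CStarRing.norm_coe_unitary]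
  exact ⟨⟨c, mem_sphere_zero_iff_norm.mpr hnorm⟩, by rw [hc, Algebra.algebraMap_eq_smul_one]⟩

namespace IsProjUnitaryRep

variable {G H : Type*} [Group G] [NormedAddCommGroup H] [InnerProductSpace ℂ H] [CompleteSpace H]
  {π : G → (H →L[ℂ] H)} (hπ : IsProjUnitaryRep π)

/-- A projective unitary representation as a homomorphism to the projective unitary group. -/
noncomputable def toProjectiveUnitaryGroup : G →* ProjectiveUnitaryGroup (H →L[ℂ] H) :=
  MonoidHom.mk' (fun x => ((⟨π x, hπ.1 x⟩ : unitary (H →L[ℂ] H)) : ProjectiveUnitaryGroup _))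
    fun x y => ProjectiveUnitaryGroup.mk_eq_mk_iff.mpr (hπ.2.2 x y)

theorem coe_ker_toProjectiveUnitaryGroup :
    (hπ.toProjectiveUnitaryGroup.ker : Set G) = ProjKer π := by
  ext x
  exact eq_comm.trans ProjectiveUnitaryGroup.mk_eq_mk_iff

theorem ker_toProjectiveUnitaryGroup_eq_bot (hfaith : PFaithful π) :
    hπ.toProjectiveUnitaryGroup.ker = ⊥ :=
  (Subgroup.eq_bot_iff_forall _).mpr fun x hx =>
    hfaith x (hπ.coe_ker_toProjectiveUnitaryGroup ▸ hx)

/-- The central extension `T · π(G)` of `G / Pker(π)` by the circle: the group of unitary operators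
with the same image in the projective unitary group as some `π x`. -/
noncomputable def centralExtension : Subgroup (unitary (H →L[ℂ] H)) :=
  hπ.toProjectiveUnitaryGroup.range.comap (QuotientGroup.mk' (unitaryScalars (H →L[ℂ] H)))

theorem mk_mem_centralExtension (x : G) :
    (⟨π x, hπ.1 x⟩ : unitary (H →L[ℂ] H)) ∈ hπ.centralExtension :=
  ⟨x, rfl⟩

theorem isUnitaryRep_centralExtension :
    IsUnitaryRep fun u : hπ.centralExtension => ((u : unitary (H →L[ℂ] H)) : H →L[ℂ] H) :=
  ⟨fun u => u.1.2, rfl, fun _ _ => rfl⟩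

theorem isIrreducibleRep_centralExtension (hirr : IsIrreducibleRep π) :
    IsIrreducibleRep fun u : hπ.centralExtension => ((u : unitary (H →L[ℂ] H)) : H →L[ℂ] H) :=
  fun K hK hinv => hirr K hK fun x => hinv ⟨_, hπ.mk_mem_centralExtension x⟩

theorem center_centralExtension (hirr : IsIrreducibleRep π) :
    Subgroup.center hπ.centralExtension =
      (unitaryScalars (H →L[ℂ] H)).subgroupOf hπ.centralExtension := by
  refine le_antisymm (fun u hu => ?_) fun u hu => ?_
  · refine hirr.mem_unitaryScalars_of_commute fun x => ?_
    have hcomm := Subgroup.mem_center_iff.mp hu ⟨_, hπ.mk_mem_centralExtension x⟩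
    exact congrArg (fun v : hπ.centralExtension => (v.1 : H →L[ℂ] H)) hcomm.symm
  · exact Subgroup.mem_center_iff.mpr fun v =>
      Subtype.ext (Subgroup.mem_center_iff.mp (unitaryScalars_le_center hu) v)

/-- The isomorphism `T · π(G) / T ≃ G / Pker(π)`. -/
noncomputable def centralExtensionQuotientEquiv :
    hπ.centralExtension ⧸ (unitaryScalars (H →L[ℂ] H)).subgroupOf hπ.centralExtension ≃*
      G ⧸ hπ.toProjectiveUnitaryGroup.ker :=
  let toRange : hπ.centralExtension →* hπ.toProjectiveUnitaryGroup.range :=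
    (QuotientGroup.mk' (unitaryScalars (H →L[ℂ] H))).subgroupComap
      hπ.toProjectiveUnitaryGroup.range
  have hker : (unitaryScalars (H →L[ℂ] H)).subgroupOf hπ.centralExtension = toRange.ker := by
    ext u
    exact (QuotientGroup.eq_one_iff u.1).symm.trans
      (Subtype.ext_iff (a1 := toRange u) (a2 := 1)).symm
  (QuotientGroup.quotientMulEquivOfEq hker).trans <|
    (QuotientGroup.quotientKerEquivOfSurjective toRange <|
      MonoidHom.subgroupComap_surjective_of_surjective _ _ (QuotientGroup.mk'_surjective _)).trans
    (QuotientGroup.quotientKerEquivRange _).symm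

end IsProjUnitaryRep

universe u v

theorem stmt_0_general {Γ : Type u} [Group Γ] {H : Type v} [NormedAddCommGroup H]
    [InnerProductSpace ℂ H] [CompleteSpace H] {π : Γ → (H →L[ℂ] H)} (hπ : IsProjUnitaryRep π)
    (hirr : IsIrreducibleRep π) :
    ∃ (Δ : Type v) (_ : Group Δ) (K : Type v) (_ : NormedAddCommGroup K)
      (_ : InnerProductSpace ℂ K) (_ : CompleteSpace K) (φ : Δ → (K →L[ℂ] K)),
      IsUnitaryRep φ ∧ Function.Injective φ ∧ IsIrreducibleRep φ ∧
        Nonempty ((Δ ⧸ Subgroup.center Δ) ≃* (Γ ⧸ hπ.toProjectiveUnitaryGroup.ker)) :=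
  ⟨hπ.centralExtension, inferInstance, H, inferInstance, inferInstance, inferInstance,
    fun u => ((u : unitary (H →L[ℂ] H)) : H →L[ℂ] H), hπ.isUnitaryRep_centralExtension,
    Subtype.val_injective.comp Subtype.val_injective, hπ.isIrreducibleRep_centralExtension hirr,
    ⟨(QuotientGroup.quotientMulEquivOfEq (hπ.center_centralExtension hirr)).trans
      hπ.centralExtensionQuotientEquiv⟩⟩

/-- If Γ has an irreducible, projectively faithful projective unitary representation, then
Γ is the quotient of a group Δ (admitting a faithful irreducible unitary representation)
by its centre. -/
theorem stmt_0 (Γ : Type) [Group Γ]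
    (H : Type) [NormedAddCommGroup H] [InnerProductSpace ℂ H] [CompleteSpace H]
    (π : Γ → (H →L[ℂ] H)) (hπ : IsProjUnitaryRep π) (hirr : IsIrreducibleRep π)
    (hfaith : PFaithful π) :
    ∃ (Δ : Type) (_ : Group Δ) (K : Type) (_ : NormedAddCommGroup K)
      (_ : InnerProductSpace ℂ K) (_ : CompleteSpace K) (φ : Δ → (K →L[ℂ] K)),
      IsUnitaryRep φ ∧ Function.Injective φ ∧ IsIrreducibleRep φ ∧
        Nonempty ((Δ ⧸ Subgroup.center Δ) ≃* Γ) := by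
  obtain ⟨Δ, _, K, _, _, _, φ, hφ, hinj, hφirr, ⟨e⟩⟩ := stmt_0_general hπ hirr
  exact ⟨Δ, _, K, _, _, _, φ, hφ, hinj, hφirr, ⟨e.trans <| (QuotientGroup.quotientMulEquivOfEq
    (hπ.ker_toProjectiveUnitaryGroup_eq_bot hfaith)).trans QuotientGroup.quotientBot⟩⟩
end

section
/- Let Γ be a group. If there exists a group Δ admitting a faithful irreducible unitary representation on a complex Hilbert space such that Δ/Z(Δ) is isomorphic to Γ, then Γ has a projective unitary representation on some complex Hilbert space which is both irreducible and projectively faithful. -/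
/-!
By Schur's lemma an irreducible unitary representation `φ` of `Δ` sends the centre of `Δ` to
scalars, and when `φ` is faithful only central elements act as scalars, so `Pker φ = Z(Δ)`. Hence
`φ` composed with a set-theoretic section of `Δ → Δ/Z(Δ)` fixing `1` is a projective representation
of the quotient. It has the same closed invariant subspaces as `φ`, and its projective kernel is
trivial.

Schur's lemma holds for a normal operator `T` in the commutant: if its spectrum had two points,
the functional calculus would give two nonzero operators with product zero, and the kernel of the
first would be a proper nontrivial closed invariant subspace.
-/

open Function

theorem spectrum_subsingleton_of_cfc_mul_eq_zero {𝕜 A : Type*} [RCLike 𝕜] {p : A → Prop} [Ring A]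
    [StarRing A] [TopologicalSpace A] [Algebra 𝕜 A] [ContinuousFunctionalCalculus 𝕜 A p] {a : A}
    (ha : p a)
    (h : ∀ f g : 𝕜 → 𝕜, cfc f a * cfc g a = 0 → cfc f a = 0 ∨ cfc g a = 0) :
    (spectrum 𝕜 a).Subsingleton := by
  intro μ hμ ν hν
  let bump (x y w : 𝕜) : 𝕜 := ((max 0 (dist w y - dist w x) : ℝ) : 𝕜)
  have continuous_bump (x y : 𝕜) : Continuous (bump x y) := by fun_prop
  have bump_mul_bump (w : 𝕜) : bump μ ν w * bump ν μ w = 0 := by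
    rcases le_total (dist w μ) (dist w ν) with hw | hw <;> simp [bump, hw]
  have eq_of_cfc_bump_eq_zero {x y : 𝕜} (hx : x ∈ spectrum 𝕜 a) (h0 : cfc (bump x y) a = 0) :
      x = y := by
    have hbump : bump x y x = 0 :=
      eqOn_of_cfc_eq_cfc (h0.trans (cfc_const_zero 𝕜 a).symm)
        (continuous_bump x y).continuousOn continuousOn_const ha hx
    simpa [bump] using hbump
  have hmul : cfc (bump μ ν) a * cfc (bump ν μ) a = 0 := by
    rw [← cfc_mul _ _ a (continuous_bump μ ν).continuousOn (continuous_bump ν μ).continuousOn]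
    simp [bump_mul_bump]
  rcases h _ _ hmul with h0 | h0
  · exact eq_of_cfc_bump_eq_zero hμ h0
  · exact (eq_of_cfc_bump_eq_zero hν h0).symm

theorem exists_rightInverse_map_one {G G' : Type*} [Group G] [Group G'] {p : G →* G'}
    (hp : Surjective p) : ∃ s : G' → G, RightInverse s p ∧ s 1 = 1 := by
  classical
  refine ⟨update (surjInv hp) 1 1, fun x => ?_, update_self ..⟩
  by_cases hx : x = 1
  · simp [hx]
  · simp [hx, surjInv_eq hp]

section Representation

variable {G : Type*} {H : Type*} [NormedAddCommGroup H] [InnerProductSpace ℂ H] [CompleteSpace H]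
  {φ : G → (H →L[ℂ] H)}

namespace IsIrreducibleRep

theorem eq_zero_or_eq_zero_of_commute_of_mul_eq_zero (hφ : IsIrreducibleRep φ) {S T : H →L[ℂ] H}
    (hS : ∀ x, Commute S (φ x)) (hST : S * T = 0) : S = 0 ∨ T = 0 := by
  have ker_invariant : ∀ x, ∀ v ∈ S.ker, φ x v ∈ S.ker := fun x v (hv : S v = 0) =>
    calc S (φ x v) = φ x (S v) := congr($((hS x).eq) v)
      _ = 0 := by rw [hv, map_zero]
  rcases hφ _ S.isClosed_ker ker_invariant with hker | hker
  · right
    ext v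
    have hv : T v ∈ S.ker := congr($hST v)
    rwa [hker] at hv
  · left
    ext v
    exact hker.ge (Submodule.mem_top (x := v))

theorem exists_eq_smul_one_of_commute (hφ : IsIrreducibleRep φ) {T : H →L[ℂ] H}
    (hT : IsStarNormal T) (hcomm : ∀ x, Commute T (φ x)) : ∃ c : ℂ, T = c • 1 := by
  have hspec : (spectrum ℂ T).Subsingleton :=
    spectrum_subsingleton_of_cfc_mul_eq_zero hT fun f _ =>
      hφ.eq_zero_or_eq_zero_of_commute_of_mul_eq_zero fun x =>
        (hcomm x).cfc (hT.commute_star_left (hcomm x)) f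
  obtain ⟨c, hc⟩ : ∃ c, spectrum ℂ T ⊆ {c} := by
    rcases hspec.eq_empty_or_singleton with hempty | ⟨c, hsingleton⟩
    · exact ⟨0, hempty ▸ Set.empty_subset _⟩
    · exact ⟨c, hsingleton.subset⟩
  exact ⟨c, by
    rw [← Algebra.algebraMap_eq_smul_one]
    exact CFC.eq_algebraMap_of_spectrum_subset_singleton T c hc⟩

theorem exists_eq_circle_smul_one_of_commute (hφ : IsIrreducibleRep φ) {U : H →L[ℂ] H}
    (hU : U ∈ unitary (H →L[ℂ] H)) (hcomm : ∀ x, Commute U (φ x)) :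
    ∃ z : Circle, U = (z : ℂ) • (1 : H →L[ℂ] H) := by
  obtain ⟨c, rfl⟩ := hφ.exists_eq_smul_one_of_commute (isStarNormal_of_mem_unitary hU) hcomm
  rcases subsingleton_or_nontrivial H with hH | hH
  · exact ⟨1, Subsingleton.elim _ _⟩
  · have hc : ‖c‖ = 1 := by simpa [norm_smul] using CStarRing.norm_of_mem_unitary hU
    exact ⟨⟨c, mem_sphere_zero_iff_norm.2 hc⟩, rfl⟩

end IsIrreducibleRep

variable [Group G]

namespace IsUnitaryRep

theorem isProjUnitaryRep (hφ : IsUnitaryRep φ) : IsProjUnitaryRep φ :=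
  ⟨hφ.1, hφ.2.1, fun x y => ⟨1, by rw [Circle.coe_one, one_smul, hφ.2.2]⟩⟩

theorem projKer_subset_center (hφ : IsUnitaryRep φ) (hinj : Injective φ) :
    ProjKer φ ⊆ Subgroup.center G := by
  rintro x ⟨z, hz⟩
  refine Subgroup.mem_center_iff.2 fun y => hinj ?_
  rw [hφ.2.2, hφ.2.2, hz, mul_smul_one, smul_one_mul]

theorem center_subset_projKer (hφ : IsUnitaryRep φ) (hirr : IsIrreducibleRep φ) :
    (Subgroup.center G : Set G) ⊆ ProjKer φ := fun x hx =>
  hirr.exists_eq_circle_smul_one_of_commute (hφ.1 x) fun y => by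
    rw [commute_iff_eq, ← hφ.2.2, ← hφ.2.2, Subgroup.mem_center_iff.1 hx y]

end IsUnitaryRep

namespace IsProjUnitaryRep

theorem exists_eq_circle_smul_of_inv_mul_mem_projKer (hφ : IsProjUnitaryRep φ) {x y : G}
    (hxy : x⁻¹ * y ∈ ProjKer φ) : ∃ z : Circle, φ y = (z : ℂ) • φ x := by
  obtain ⟨w, hw⟩ := hxy
  obtain ⟨z, hz⟩ := hφ.2.2 x (x⁻¹ * y)
  rw [hw, mul_smul_one, mul_inv_cancel_left] at hz
  refine ⟨z⁻¹ * w, ?_⟩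
  rw [Circle.coe_mul, mul_smul, hz, smul_smul, ← Circle.coe_mul, inv_mul_cancel, Circle.coe_one,
    one_smul]

variable {G' : Type*} [Group G'] {p : G →* G'} {s : G' → G}

theorem exists_eq_circle_smul_of_map_eq (hφ : IsProjUnitaryRep φ)
    (hker : (p.ker : Set G) ⊆ ProjKer φ) {x y : G} (hxy : p x = p y) :
    ∃ z : Circle, φ y = (z : ℂ) • φ x :=
  hφ.exists_eq_circle_smul_of_inv_mul_mem_projKer (hker (p.eq_iff.1 hxy.symm))

theorem comp_rightInverse (hφ : IsProjUnitaryRep φ) (hker : (p.ker : Set G) ⊆ ProjKer φ)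
    (hs : RightInverse s p) (hs1 : s 1 = 1) : IsProjUnitaryRep (φ ∘ s) := by
  refine ⟨fun x => hφ.1 (s x), by rw [comp_apply, hs1, hφ.2.1], fun x y => ?_⟩
  obtain ⟨z, hz⟩ := hφ.2.2 (s x) (s y)
  obtain ⟨w, hw⟩ : ∃ w : Circle, φ (s x * s y) = (w : ℂ) • φ (s (x * y)) :=
    hφ.exists_eq_circle_smul_of_map_eq hker (by rw [map_mul, hs, hs, hs])
  exact ⟨z * w, by rw [comp_apply, comp_apply, hz, hw, smul_smul, Circle.coe_mul, comp_apply]⟩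

theorem isIrreducibleRep_comp_rightInverse (hφ : IsProjUnitaryRep φ) (hirr : IsIrreducibleRep φ)
    (hker : (p.ker : Set G) ⊆ ProjKer φ) (hs : RightInverse s p) : IsIrreducibleRep (φ ∘ s) := by
  refine fun L hL hinv => hirr L hL fun x v hv => ?_
  obtain ⟨z, hz⟩ := hφ.exists_eq_circle_smul_of_map_eq hker (hs (p x))
  rw [hz]
  exact L.smul_mem _ (hinv (p x) v hv)

end IsProjUnitaryRep

theorem pFaithful_comp_rightInverse {G' : Type*} [Group G'] {p : G →* G'} {s : G' → G}
    (hker : ProjKer φ ⊆ p.ker) (hs : RightInverse s p) : PFaithful (φ ∘ s) := fun x hx =>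
  calc x = p (s x) := (hs x).symm
    _ = 1 := MonoidHom.mem_ker.1 (hker hx)

theorem IsProjUnitaryRep.exists_of_ker_eq_projKer {G' : Type*} [Group G'] {p : G →* G'}
    (hφ : IsProjUnitaryRep φ) (hirr : IsIrreducibleRep φ) (hp : Surjective p)
    (hker : (p.ker : Set G) = ProjKer φ) :
    ∃ π : G' → (H →L[ℂ] H), IsProjUnitaryRep π ∧ IsIrreducibleRep π ∧ PFaithful π := by
  obtain ⟨s, hs, hs1⟩ := exists_rightInverse_map_one hp
  exact ⟨φ ∘ s, hφ.comp_rightInverse hker.subset hs hs1,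
    hφ.isIrreducibleRep_comp_rightInverse hirr hker.subset hs,
    pFaithful_comp_rightInverse hker.superset hs⟩

end Representation

theorem stmt_1_general {Γ Δ K : Type*} [Group Γ] [Group Δ] [NormedAddCommGroup K]
    [InnerProductSpace ℂ K] [CompleteSpace K] {φ : Δ → (K →L[ℂ] K)} (hrep : IsUnitaryRep φ)
    (hirr : IsIrreducibleRep φ) (hker : ProjKer φ ⊆ Subgroup.center Δ)
    (e : (Δ ⧸ Subgroup.center Δ) ≃* Γ) :
    ∃ π : Γ → (K →L[ℂ] K), IsProjUnitaryRep π ∧ IsIrreducibleRep π ∧ PFaithful π := by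
  let p : Δ →* Γ := (e : (Δ ⧸ Subgroup.center Δ) →* Γ).comp (QuotientGroup.mk' _)
  have hp : Surjective p := e.surjective.comp (QuotientGroup.mk'_surjective _)
  have hpker : p.ker = Subgroup.center Δ := by
    rw [MonoidHom.ker_mulEquiv_comp, QuotientGroup.ker_mk']
  have hcenter : (Subgroup.center Δ : Set Δ) = ProjKer φ :=
    (hrep.center_subset_projKer hirr).antisymm hker
  exact hrep.isProjUnitaryRep.exists_of_ker_eq_projKer hirr hp (hpker ▸ hcenter)

/-- If Γ ≅ Δ/Z(Δ) where Δ admits a faithful irreducible unitary representation, then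
Γ has an irreducible, projectively faithful projective unitary representation. -/
theorem stmt_1 (Γ : Type) [Group Γ] (Δ : Type) [Group Δ]
    (K : Type) [NormedAddCommGroup K] [InnerProductSpace ℂ K] [CompleteSpace K]
    (φ : Δ → (K →L[ℂ] K)) (hrep : IsUnitaryRep φ) (hinj : Function.Injective φ)
    (hirr : IsIrreducibleRep φ) (e : (Δ ⧸ Subgroup.center Δ) ≃* Γ) :
    ∃ (H : Type) (_ : NormedAddCommGroup H) (_ : InnerProductSpace ℂ H) (_ : CompleteSpace H)
      (π : Γ → (H →L[ℂ] H)),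
      IsProjUnitaryRep π ∧ IsIrreducibleRep π ∧ PFaithful π :=
  ⟨K, _, _, inferInstance, stmt_1_general hrep hirr (hrep.projKer_subset_center hinj) e⟩
end

section
/- A perfect group with non-trivial centre is incapable: if Γ is a group equal to its commutator subgroup and Z(Γ) ≠ {e}, then there is no group Δ such that Δ/Z(Δ) is isomorphic to Γ. -/
section

open Subgroup Group

variable {G Q : Type*} [Group G] [Group Q]

theorem commutator_self_le_centralizer {H K : Subgroup G} (h : ⁅⁅H, K⁆, K⁆ = ⊥) :
    ⁅K, K⁆ ≤ centralizer H :=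
  commutator_eq_bot_iff_le_centralizer.mp <|
    commutator_commutator_eq_bot_of_rotate (by rwa [commutator_comm K H]) h

theorem commutator_comap_center_top_le_ker (f : G →* Q) :
    ⁅(center Q).comap f, (⊤ : Subgroup G)⁆ ≤ f.ker := by
  refine commutator_le.mpr fun x hx y _ ↦ ?_
  rw [MonoidHom.mem_ker, map_commutatorElement, commutatorElement_eq_one_iff_mul_comm]
  exact (mem_center_iff.mp hx (f y)).symm

theorem center_le_comap_center {f : G →* Q} (hf : Function.Surjective f) :
    center G ≤ (center Q).comap f := by
  refine fun z hz ↦ mem_center_iff.mpr <| hf.forall.mpr fun g ↦ ?_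
  rw [← map_mul, ← map_mul, mem_center_iff.mp hz g]

theorem isPerfect_iff_commutator_sup_ker_eq_top {f : G →* Q} (hf : Function.Surjective f) :
    IsPerfect Q ↔ commutator G ⊔ f.ker = ⊤ := by
  rw [isPerfect_def, ← comap_map_eq, map_commutator_eq, f.range_eq_top_of_surjective hf,
    ← commutator_def, ← comap_top f, (comap_injective hf).eq_iff]

/-- The preimage of `center Q` is centralized by `commutator G`, by the three subgroups lemma, and
by the central subgroup `f.ker`; since `Q` is perfect, these two generate `G`. -/
theorem comap_center_eq_center [IsPerfect Q] {f : G →* Q} (hf : Function.Surjective f)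
    (hker : f.ker ≤ center G) : (center Q).comap f = center G := by
  refine le_antisymm ?_ (center_le_comap_center hf)
  have hcomm : commutator G ≤ centralizer ((center Q).comap f) :=
    commutator_self_le_centralizer <| commutator_top_right_eq_bot_iff_le_center.mpr <|
      (commutator_comap_center_top_le_ker f).trans hker
  have hcentral : f.ker ≤ centralizer ((center Q).comap f) :=
    hker.trans (center_le_centralizer _)
  have hgen : commutator G ⊔ f.ker = ⊤ :=
    (isPerfect_iff_commutator_sup_ker_eq_top hf).mp inferInstance
  have htop : centralizer ((center Q).comap f : Set G) = ⊤ :=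
    top_le_iff.mp (hgen ▸ sup_le hcomm hcentral)
  exact centralizer_eq_top_iff_subset.mp htop

end

/-- A perfect group with non-trivial centre is incapable. -/
theorem stmt_4 (Γ : Type*) [Group Γ] (hperf : commutator Γ = ⊤)
    (hcentre : Subgroup.center Γ ≠ ⊥) (Δ : Type*) [Group Δ] :
    IsEmpty ((Δ ⧸ Subgroup.center Δ) ≃* Γ) := by
  refine ⟨fun e ↦ hcentre ?_⟩
  have : Group.IsPerfect Γ := ⟨hperf⟩
  let f : Δ →* Γ := (e : Δ ⧸ Subgroup.center Δ →* Γ).comp (QuotientGroup.mk' _)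
  have hf : Function.Surjective f := e.surjective.comp (QuotientGroup.mk'_surjective _)
  have hker : f.ker = Subgroup.center Δ :=
    (MonoidHom.ker_mulEquiv_comp _ e).trans (QuotientGroup.ker_mk' _)
  have hcomap : (Subgroup.center Γ).comap f = f.ker :=
    (comap_center_eq_center hf hker.le).trans hker.symm
  exact (Subgroup.comap_eq_ker_of_surjective hf).mp hcomap
end

section
/- Let Γ be a group, ζ ∈ Z²(Γ,T) a normalised multiplier, N a normal subgroup of Γ, and σ : N → U(H) a map with σ(e) = id and σ(x)σ(y) = ζ(x,y)σ(xy) for all x,y ∈ N. For γ ∈ Γ define σ^γ : N → U(H) by σ^γ(x) = ζ(γ,x)·ζ(γx,γ⁻¹)·σ(γxγ⁻¹). Then: (i) σ^γ(e) = id and σ^γ(x)·σ^γ(y) = ζ(x,y)·σ^γ(xy) for all x,y ∈ N; (ii) σ^{γ₁γ₂} = (σ^{γ₁})^{γ₂} for all γ₁, γ₂ ∈ Γ. -/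
/-!
A multiplier `ζ` defines a central extension of `Γ` by the circle, with product
`(x, a)(y, b) = (xy, a b ζ(x,y))`. When `ζ` is normalised, conjugation by any element over `γ` is
`(x, a) ↦ (γxγ⁻¹, a ζ(γ,x) ζ(γx,γ⁻¹))`, so the scalar in the definition of `σ^γ` is the one picked
up by conjugation in the extension. Conjugation is an automorphism, which is what (i) needs, and it
depends multiplicatively on the conjugating element, which is what (ii) needs.
-/

/-- The scalar `ζ(γ,x)·ζ(γx,γ⁻¹)` of `conjRep`, as an element of the circle. -/
noncomputable def conjCoeff {G : Type*} [Group G] (ζ : G → G → Circle) (γ x : G) : Circle :=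
  ζ γ x * ζ (γ * x) γ⁻¹

/-- The central extension of `G` by the circle defined by a multiplier `ζ`: pairs multiplied by
`(x, a)(y, b) = (xy, a b ζ(x,y))`. The proof that `ζ` is a multiplier is a parameter of the type, so
that the group structure can be an instance. -/
structure IsMultiplier.Extension {G : Type*} [Group G] {ζ : G → G → Circle}
    (hζ : IsMultiplier ζ) where
  base : G
  scalar : Circle

namespace IsMultiplier.Extension

variable {G : Type*} [Group G] {ζ : G → G → Circle} {hζ : IsMultiplier ζ}

noncomputable instance : Mul hζ.Extension :=
  ⟨fun p q ↦ ⟨p.base * q.base, p.scalar * q.scalar * ζ p.base q.base⟩⟩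

noncomputable instance : One hζ.Extension := ⟨⟨1, 1⟩⟩

noncomputable instance : Inv hζ.Extension :=
  ⟨fun p ↦ ⟨p.base⁻¹, (p.scalar * ζ p.base⁻¹ p.base)⁻¹⟩⟩

theorem mul_def (p q : hζ.Extension) :
    p * q = ⟨p.base * q.base, p.scalar * q.scalar * ζ p.base q.base⟩ := rfl

theorem one_def : (1 : hζ.Extension) = ⟨1, 1⟩ := rfl

theorem inv_def (p : hζ.Extension) :
    p⁻¹ = ⟨p.base⁻¹, (p.scalar * ζ p.base⁻¹ p.base)⁻¹⟩ := rfl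

protected theorem mul_assoc (p q r : hζ.Extension) : p * q * r = p * (q * r) := by
  obtain ⟨x, a⟩ := p
  obtain ⟨y, b⟩ := q
  obtain ⟨z, c⟩ := r
  simp only [mul_def, Extension.mk.injEq, mul_assoc, true_and]
  calc a * (b * (ζ x y * (c * ζ (x * y) z)))
      = a * (b * (c * (ζ x y * ζ (x * y) z))) := by rw [mul_left_comm (ζ x y) c]
    _ = a * (b * (c * (ζ y z * ζ x (y * z)))) := by rw [hζ.2.2, mul_comm (ζ y z)]

noncomputable instance : Group hζ.Extension :=
  Group.ofLeftAxioms Extension.mul_assoc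
    (fun p ↦ by simp only [mul_def, one_def, one_mul, mul_one, hζ.1])
    (fun p ↦ by simp only [mul_def, one_def, inv_def, inv_mul_cancel, mul_assoc])

theorem conj_eq (hnorm : IsNormalised ζ) (p q : hζ.Extension) :
    p * q * p⁻¹ =
      ⟨p.base * q.base * p.base⁻¹, q.scalar * conjCoeff ζ p.base q.base⟩ := by
  have hinv : ζ p.base⁻¹ p.base = 1 := by simpa only [inv_inv] using hnorm p.base⁻¹
  simp only [mul_def, inv_def, hinv, mul_one, conjCoeff, Extension.mk.injEq, true_and]
  rw [mul_right_comm _ _ p.scalar⁻¹, mul_right_comm p.scalar, mul_inv_cancel, one_mul, mul_assoc]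

end IsMultiplier.Extension

section conjCoeff

open IsMultiplier.Extension

variable {G : Type*} [Group G] {ζ : G → G → Circle}

theorem conjCoeff_one_right (hζ : IsMultiplier ζ) (hnorm : IsNormalised ζ) (γ : G) :
    conjCoeff ζ γ 1 = 1 := by
  rw [conjCoeff, hζ.2.1, mul_one, hnorm, mul_one]

theorem conjCoeff_mul_right (hζ : IsMultiplier ζ) (hnorm : IsNormalised ζ) (γ x y : G) :
    ζ x y * conjCoeff ζ γ (x * y) =
      conjCoeff ζ γ x * conjCoeff ζ γ y * ζ (γ * x * γ⁻¹) (γ * y * γ⁻¹) := by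
  let lift : G → hζ.Extension := fun z ↦ ⟨z, 1⟩
  have hconj : lift γ * (lift x * lift y) * (lift γ)⁻¹ =
      lift γ * lift x * (lift γ)⁻¹ * (lift γ * lift y * (lift γ)⁻¹) := conj_mul.symm
  rw [conj_eq hnorm, conj_eq hnorm, conj_eq hnorm] at hconj
  simpa only [lift, mul_def, one_mul] using congrArg scalar hconj

theorem conjCoeff_mul_left (hζ : IsMultiplier ζ) (hnorm : IsNormalised ζ) (g h x : G) :
    conjCoeff ζ (g * h) x = conjCoeff ζ h x * conjCoeff ζ g (h * x * h⁻¹) := by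
  let lift : G → hζ.Extension := fun z ↦ ⟨z, 1⟩
  have hconj : lift g * lift h * lift x * (lift g * lift h)⁻¹ =
      lift g * (lift h * lift x * (lift h)⁻¹) * (lift g)⁻¹ := by group
  -- `lift g * lift h` is not `lift (g * h)`, but `conj_eq` only sees its base.
  rw [conj_eq hnorm, conj_eq hnorm, conj_eq hnorm] at hconj
  simpa only [lift, mul_def, one_mul] using congrArg scalar hconj

end conjCoeff

section conjRep

variable {G : Type*} [Group G] {H : Type*} [NormedAddCommGroup H] [InnerProductSpace ℂ H]
  [CompleteSpace H] {ζ : G → G → Circle} {N : Subgroup G} [N.Normal]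

theorem circle_coe_mem_unitary (z : Circle) : (z : ℂ) ∈ unitary ℂ := by
  rw [Unitary.mem_iff_self_mul_star, Complex.star_def, Complex.mul_conj, Circle.normSq_coe,
    Complex.ofReal_one]

theorem conjRep_apply (σ : N → (H →L[ℂ] H)) (γ : G) (x : N) :
    conjRep ζ N σ γ x = (conjCoeff ζ γ x : ℂ) • σ (MulAut.conjNormal γ x) :=
  dif_pos ((inferInstance : N.Normal).conj_mem x x.2 γ)

theorem IsZetaRepOn.conjRep (hζ : IsMultiplier ζ) (hnorm : IsNormalised ζ)
    {σ : N → (H →L[ℂ] H)} (hσ : IsZetaRepOn ζ N σ) (γ : G) :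
    IsZetaRepOn ζ N (conjRep ζ N σ γ) := by
  obtain ⟨hunitary, hone, hmul⟩ := hσ
  refine ⟨fun x ↦ ?_, ?_, fun x y ↦ ?_⟩
  · rw [conjRep_apply]
    exact Unitary.smul_mem_of_mem (circle_coe_mem_unitary _) (hunitary _)
  · rw [conjRep_apply, map_one, hone, Subgroup.coe_one, conjCoeff_one_right hζ hnorm,
      Circle.coe_one, one_smul]
  · simp only [conjRep_apply]
    rw [smul_mul_smul_comm, hmul, ← map_mul, smul_smul, smul_smul, Subgroup.coe_mul,
      MulAut.conjNormal_apply, MulAut.conjNormal_apply, ← Circle.coe_mul, ← Circle.coe_mul,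
      ← Circle.coe_mul, conjCoeff_mul_right hζ hnorm]

theorem conjRep_mul (hζ : IsMultiplier ζ) (hnorm : IsNormalised ζ) (σ : N → (H →L[ℂ] H))
    (g h : G) : conjRep ζ N σ (g * h) = conjRep ζ N (conjRep ζ N σ g) h := by
  funext x
  simp only [conjRep_apply, smul_smul, conjCoeff_mul_left hζ hnorm, Circle.coe_mul, map_mul,
    MulAut.mul_apply, MulAut.conjNormal_apply]

end conjRep

/-- For a normalised multiplier ζ and a ζ-representation σ of a normal subgroup N:
(i) each conjugate σ^γ is again a ζ-representation of N; (ii) σ^{γ₁γ₂} = (σ^{γ₁})^{γ₂}. -/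
theorem stmt_9 (Γ : Type*) [Group Γ] (H : Type*) [NormedAddCommGroup H]
    [InnerProductSpace ℂ H] [CompleteSpace H] (ζ : Γ → Γ → Circle) (hζ : IsMultiplier ζ)
    (hnorm : IsNormalised ζ) (N : Subgroup Γ) (hN : N.Normal)
    (σ : N → (H →L[ℂ] H)) (hσ : IsZetaRepOn ζ N σ) :
    (∀ γ : Γ, IsZetaRepOn ζ N (conjRep ζ N σ γ)) ∧
      ∀ γ₁ γ₂ : Γ, conjRep ζ N σ (γ₁ * γ₂) = conjRep ζ N (conjRep ζ N σ γ₁) γ₂ := by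
  exact ⟨hσ.conjRep hζ hnorm, conjRep_mul hζ hnorm σ⟩
end

section
/- (P. Hall) Let Γ be a group containing an element s₀ ≠ e such that the set {s ∈ Γ : there exists n ∈ ℤ with sⁿ = s₀} generates Γ. Then Γ is incapable: there is no group Δ such that Δ/Z(Δ) is isomorphic to Γ. -/
/-!
If `g` maps to a root of the image of `t` under a homomorphism with central kernel, then `t` is a
power of `g` times a central element, so `g` commutes with `t`. When these roots generate the
quotient, the centralizer of `t` maps onto it; containing the kernel, it is everything. Thus a lift
of `s₀` to `Δ` is central, which forces `s₀ = 1`.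
-/

section CentralKernel

variable {G H : Type*} [Group G] [Group H] {f : G →* H}

theorem commute_of_map_zpow_eq_map {g t : G} (hker : f.ker ≤ Subgroup.centralizer {g}) {n : ℤ}
    (h : f g ^ n = f t) : Commute g t := by
  have hdiff : Commute g ((g ^ n)⁻¹ * t) :=
    (Subgroup.mem_centralizer_singleton_iff.1 <| hker <| by
      simp only [MonoidHom.mem_ker, map_mul, map_inv, map_zpow, h, inv_mul_cancel]).symm
  simpa only [mul_inv_cancel_left] using (Commute.self_zpow g n).mul_right hdiff

theorem closure_zpow_roots_le_map_centralizer (hf : Function.Surjective f)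
    (hker : f.ker ≤ Subgroup.center G) (t : G) :
    Subgroup.closure {s : H | ∃ n : ℤ, s ^ n = f t} ≤ (Subgroup.centralizer {t}).map f := by
  rw [Subgroup.closure_le]
  rintro s ⟨n, hn⟩
  obtain ⟨g, rfl⟩ := hf s
  have hgt : Commute g t :=
    commute_of_map_zpow_eq_map (hker.trans (Subgroup.center_le_centralizer _)) hn
  exact Subgroup.mem_map_of_mem f (Subgroup.mem_centralizer_singleton_iff.2 hgt.eq)

theorem mem_center_of_closure_zpow_roots_map_eq_top (hf : Function.Surjective f)
    (hker : f.ker ≤ Subgroup.center G) {t : G}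
    (hgen : Subgroup.closure {s : H | ∃ n : ℤ, s ^ n = f t} = ⊤) : t ∈ Subgroup.center G := by
  have hmap : (Subgroup.centralizer {t}).map f = ⊤ :=
    top_le_iff.1 (hgen ▸ closure_zpow_roots_le_map_centralizer hf hker t)
  have htop : Subgroup.centralizer {t} = ⊤ := by
    rw [← Subgroup.comap_map_eq_self (hker.trans (Subgroup.center_le_centralizer _)), hmap,
      Subgroup.comap_top]
  exact Subgroup.centralizer_eq_top_iff_subset.1 htop rfl

end CentralKernel

/-- P. Hall's lemma: if some `s₀ ≠ 1` is such that its "roots" generate Γ, then Γ is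
incapable. -/
theorem stmt_11 (Γ : Type*) [Group Γ] (s₀ : Γ) (hs₀ : s₀ ≠ 1)
    (hgen : Subgroup.closure {s : Γ | ∃ n : ℤ, s ^ n = s₀} = ⊤)
    (Δ : Type*) [Group Δ] :
    IsEmpty ((Δ ⧸ Subgroup.center Δ) ≃* Γ) := by
  refine ⟨fun e => hs₀ ?_⟩
  let f : Δ →* Γ := e.toMonoidHom.comp (QuotientGroup.mk' (Subgroup.center Δ))
  have hf : Function.Surjective f := e.surjective.comp (QuotientGroup.mk'_surjective _)
  have hker : f.ker = Subgroup.center Δ :=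
    (MonoidHom.ker_mulEquiv_comp _ e).trans (QuotientGroup.ker_mk' _)
  obtain ⟨t₀, rfl⟩ := hf s₀
  have ht₀ : t₀ ∈ Subgroup.center Δ :=
    mem_center_of_closure_zpow_roots_map_eq_top hf hker.le hgen
  exact MonoidHom.mem_ker.1 (hker.ge ht₀)
end

section
/- Every nontrivial subgroup of the additive group ℚ of rational numbers is incapable: if Γ is a subgroup of (ℚ, +) with Γ ≠ {0}, then there is no group Δ such that Δ/Z(Δ) is isomorphic to Γ. -/
/-!
A finitely generated subgroup of `ℚ` is a fractional ideal of the principal ideal domain `ℤ`, hence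
cyclic. If any two elements of `Δ ⧸ Z(Δ)` lie in a cyclic subgroup, then any two elements of `Δ` are
powers of one element up to central factors, so they commute; then `Δ ⧸ Z(Δ)` is trivial.
-/

/-- A group is locally cyclic if all its finitely generated subgroups are cyclic. This is the
property of subgroups of `ℚ` that makes them incapable. -/
def IsLocallyCyclic (G : Type*) [Group G] : Prop :=
  ∀ H : Subgroup G, Group.FG H → IsCyclic H

namespace IsLocallyCyclic

variable {G G' : Type*} [Group G] [Group G']

theorem isCyclic_map (hG' : IsLocallyCyclic G') (f : G →* G') (H : Subgroup G) [Group.FG H] :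
    IsCyclic (H.map f) :=
  hG' _ (Group.fg_of_surjective (f.subgroupMap_surjective H))

theorem of_injective (hG' : IsLocallyCyclic G') (f : G →* G') (hf : Function.Injective f) :
    IsLocallyCyclic G := by
  intro H _
  exact (H.equivMapOfInjective f hf).isCyclic.mpr (hG'.isCyclic_map f H)

theorem isMulCommutative_of_ker_le_center (hG' : IsLocallyCyclic G') (f : G →* G')
    (hf : f.ker ≤ Subgroup.center G) : IsMulCommutative G := by
  refine ⟨⟨fun x y => ?_⟩⟩
  let H := Subgroup.closure {x, y}
  have hx : x ∈ H := Subgroup.subset_closure (Set.mem_insert x {y})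
  have hy : y ∈ H := Subgroup.subset_closure (Set.mem_insert_of_mem x rfl)
  have : Group.FG H := Group.closure_finite_fg {x, y}
  have : IsCyclic (H.map f) := hG'.isCyclic_map f H
  have hker : (f.subgroupMap H).ker ≤ Subgroup.center H := by
    intro h hh
    have hcenter : (h : G) ∈ Subgroup.center G := hf (congrArg Subtype.val hh)
    exact Subgroup.mem_center_iff.mpr fun g =>
      Subtype.ext (Subgroup.mem_center_iff.mp hcenter g)
  have : IsMulCommutative H :=
    (f.subgroupMap H).isMulCommutative_of_isCyclic_of_ker_le_center hker
  exact congrArg Subtype.val (mul_comm' (⟨x, hx⟩ : H) ⟨y, hy⟩)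

end IsLocallyCyclic

theorem isPrincipal_submodule_of_fg_of_isFractionRing {R K : Type*} [CommRing R] [IsDomain R]
    [IsPrincipalIdealRing R] [Field K] [Algebra R K] [IsFractionRing R K] {N : Submodule R K}
    (hN : N.FG) : N.IsPrincipal :=
  FractionalIdeal.isPrincipal ⟨N, FractionalIdeal.isFractional_of_fg hN⟩

theorem isLocallyCyclic_multiplicative_rat : IsLocallyCyclic (Multiplicative ℚ) := by
  intro H hH
  let N : Submodule ℤ ℚ := AddSubgroup.toIntSubmodule H.toAddSubgroup'
  have hN : N.FG := by
    rw [Submodule.fg_iff_addSubgroup_fg, AddSubgroup.fg_iff_mul_fg]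
    exact (Group.fg_iff_subgroup_fg H).mp hH
  obtain ⟨q, hq⟩ := (isPrincipal_submodule_of_fg_of_isFractionRing hN).principal
  refine H.isCyclic_iff_exists_zpowers_eq_top.mpr ⟨.ofAdd q, ?_⟩
  ext x
  calc
    x ∈ Subgroup.zpowers (.ofAdd q) ↔ x.toAdd ∈ Submodule.span ℤ {q} :=
      Subgroup.mem_zpowers_iff.trans (Submodule.mem_span_singleton (y := q) (x := x.toAdd)).symm
    _ ↔ x.toAdd ∈ N := by rw [hq]
    _ ↔ x ∈ H := Iff.rfl

theorem stmt_12_general {G : Type*} [Group G] [Nontrivial G] (hG : IsLocallyCyclic G)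
    (Δ : Type*) [Group Δ] : IsEmpty ((Δ ⧸ Subgroup.center Δ) ≃* G) := by
  refine ⟨fun e => ?_⟩
  have hker : (QuotientGroup.mk' (Subgroup.center Δ)).ker ≤ Subgroup.center Δ :=
    (QuotientGroup.ker_mk' _).le
  have : IsMulCommutative Δ :=
    (hG.of_injective e.toMonoidHom e.injective).isMulCommutative_of_ker_le_center _ hker
  have : Subsingleton (Δ ⧸ Subgroup.center Δ) :=
    QuotientGroup.subsingleton_iff.mpr Subgroup.center_eq_top
  exact not_subsingleton G e.symm.toEquiv.subsingleton

/-- Every nontrivial subgroup of (ℚ, +) is incapable. -/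
theorem stmt_12 (Γ : AddSubgroup ℚ) (hΓ : Γ ≠ ⊥) (Δ : Type*) [Group Δ] :
    IsEmpty ((Δ ⧸ Subgroup.center Δ) ≃* Multiplicative Γ) := by
  have : Nontrivial Γ := Γ.nontrivial_iff_ne_bot.mpr hΓ
  exact stmt_12_general (isLocallyCyclic_multiplicative_rat.of_injective
    (AddMonoidHom.toMultiplicative Γ.subtype) Γ.subtype_injective) Δ
end

section
/- The group SL₂(ℤ) of 2 × 2 integer matrices of determinant 1 is incapable: there is no group Δ such that Δ/Z(Δ) is isomorphic to SL₂(ℤ). -/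
/-!
An element `c` of `Δ ⧸ Z(Δ)` is trivial as soon as its roots generate the quotient: if `g ^ n = c`,
then for lifts `x` of `g` and `z` of `c` the elements `x ^ n` and `z` differ by a central factor, so
`x` commutes with `z`; hence `z` is central. In `SL₂(ℤ)` the roots of `-1` generate, because
`S ^ 2 = (S * T) ^ 3 = -1`.
-/

open ModularGroup Subgroup
open scoped MatrixGroups

section CentralKernel

variable {Δ Γ : Type*} [Group Δ] [Group Γ] {f : Δ →* Γ}

theorem commute_of_map_mem_zpowers (hker : f.ker ≤ center Δ) {x z : Δ}
    (hz : f z ∈ zpowers (f x)) : Commute x z := by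
  obtain ⟨n, hn : f x ^ n = f z⟩ := mem_zpowers_iff.mp hz
  have hcentral : (x ^ n)⁻¹ * z ∈ center Δ := hker <| by
    rw [MonoidHom.mem_ker, map_mul, map_inv, map_zpow, hn, inv_mul_cancel]
  have hcomm : Commute x (x ^ n * ((x ^ n)⁻¹ * z)) :=
    (Commute.self_zpow x n).mul_right (mem_center_iff.mp hcentral x)
  rwa [mul_inv_cancel_left] at hcomm

theorem mem_center_of_closure_roots_eq_top (hsurj : Function.Surjective f)
    (hker : f.ker ≤ center Δ) {z : Δ} (hroots : Subgroup.closure {g | f z ∈ zpowers g} = ⊤) :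
    z ∈ center Δ := by
  have hmap : (centralizer {z}).map f = ⊤ := by
    rw [eq_top_iff, ← hroots, closure_le]
    intro g hg
    obtain ⟨x, rfl⟩ := hsurj g
    exact mem_map_of_mem f
      (mem_centralizer_singleton_iff.mpr (commute_of_map_mem_zpowers hker hg).eq)
  have hcentralizer : centralizer {z} = ⊤ := by
    rw [← comap_map_eq_self (hker.trans (center_le_centralizer {z})), hmap, comap_top]
  exact centralizer_eq_top_iff_subset.mp hcentralizer rfl

theorem eq_one_of_closure_roots_eq_top (e : Δ ⧸ center Δ ≃* Γ) {c : Γ}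
    (hroots : Subgroup.closure {g | c ∈ zpowers g} = ⊤) : c = 1 := by
  let f : Δ →* Γ := (e : Δ ⧸ center Δ →* Γ).comp (QuotientGroup.mk' (center Δ))
  have hsurj : Function.Surjective f := e.surjective.comp (QuotientGroup.mk'_surjective _)
  have hker : f.ker = center Δ := by
    rw [MonoidHom.ker_mulEquiv_comp _ e, QuotientGroup.ker_mk']
  obtain ⟨z, rfl⟩ := hsurj c
  exact hker.ge (mem_center_of_closure_roots_eq_top hsurj hker.le hroots)

end CentralKernel

theorem closure_roots_neg_one_eq_top : Subgroup.closure {g : SL(2, ℤ) | -1 ∈ zpowers g} = ⊤ := by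
  have hS : S ∈ Subgroup.closure {g : SL(2, ℤ) | -1 ∈ zpowers g} :=
    subset_closure ⟨2, show S ^ 2 = -1 by decide⟩
  have hST : S * T ∈ Subgroup.closure {g : SL(2, ℤ) | -1 ∈ zpowers g} :=
    subset_closure ⟨3, show (S * T) ^ 3 = -1 by decide⟩
  rw [eq_top_iff, ← SpecialLinearGroup.SL2Z_generators, closure_le, Set.pair_subset_iff]
  exact ⟨hS, (mul_mem_cancel_left hS).mp hST⟩

/-- SL₂(ℤ) is incapable. -/
theorem stmt_13 (Δ : Type*) [Group Δ] :
    IsEmpty ((Δ ⧸ Subgroup.center Δ) ≃* Matrix.SpecialLinearGroup (Fin 2) ℤ) := by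
  refine ⟨fun e => ?_⟩
  have hneg : (-1 : SL(2, ℤ)) = 1 :=
    eq_one_of_closure_roots_eq_top e closure_roots_neg_one_eq_top
  exact absurd hneg (by decide)
end

section
/- Let m ≥ 2 and let d₁, …, d_m ≥ 2 be integers with dᵢ dividing dᵢ₊₁ for 1 ≤ i ≤ m−1 and with d_{m−1} < d_m. Then the finite abelian group (ℤ/d₁ℤ) × ⋯ × (ℤ/d_mℤ) is incapable: there is no group Δ such that Δ/Z(Δ) is isomorphic to it. -/
/-!
Let `f : G →* Γ` be surjective with central kernel, and let `f a` be central in `Γ`. Then every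
commutator `⁅a, b⁆` is central in `G`, so `⁅a ^ n, b⁆ = ⁅a, b⁆ ^ n = ⁅a, b ^ n⁆`. This vanishes for
`b = a`, and also whenever `f b ^ n = 1`. Hence, if `Γ` is generated by `f a` together with elements
killed by `n`, then `a ^ n` is central; when the kernel of `f` is the whole centre, `f a ^ n = 1`.
In `ℤ/d₁ × ⋯ × ℤ/d_m` take `n = d_{m-1}` and for `f a` the generator of the last factor, whose order
`d_m` does not divide `n`.
-/

open Subgroup

open scoped commutatorElement

section Commutator

variable {G : Type*} [Group G] {a b : G}

theorem commutatorElement_pow_right_of_commute (h : Commute ⁅a, b⁆ b) (n : ℕ) :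
    ⁅a, b ^ n⁆ = ⁅a, b⁆ ^ n := by
  have hconj : a * b * a⁻¹ = ⁅a, b⁆ * b := by rw [commutatorElement_def, inv_mul_cancel_right]
  rw [commutatorElement_def, ← conj_pow, hconj, h.mul_pow, mul_inv_cancel_right]

theorem commutatorElement_pow_left_of_commute (h : Commute ⁅a, b⁆ a) (n : ℕ) :
    ⁅a ^ n, b⁆ = ⁅a, b⁆ ^ n := by
  rw [← commutatorElement_inv b a] at h
  rw [← commutatorElement_inv b, commutatorElement_pow_right_of_commute (Commute.inv_left_iff.mp h),
    ← inv_pow, commutatorElement_inv]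

theorem commute_pow_left_iff_commute_pow_right (h : ⁅a, b⁆ ∈ center G) (n : ℕ) :
    Commute (a ^ n) b ↔ Commute a (b ^ n) := by
  have hcomm (g : G) : Commute ⁅a, b⁆ g := (mem_center_iff.mp h g).symm
  rw [← commutatorElement_eq_one_iff_commute, ← commutatorElement_eq_one_iff_commute,
    commutatorElement_pow_left_of_commute (hcomm a),
    commutatorElement_pow_right_of_commute (hcomm b)]

end Commutator

section CentralExtension

variable {G Γ : Type*} [Group G] [Group Γ] {n : ℕ}

theorem pow_mem_center_of_closure_eq_top {f : G →* Γ} (hf : Function.Surjective f)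
    (hker : f.ker ≤ center G) {a : G} (ha : f a ∈ center Γ)
    (hgen : closure (insert (f a) {x | x ^ n = 1}) = ⊤) : a ^ n ∈ center G := by
  have hcomm (b : G) (hb : f b ^ n = 1) : Commute (a ^ n) b := by
    have hab : ⁅a, b⁆ ∈ center G := hker <| by
      rw [MonoidHom.mem_ker, map_commutatorElement, commutatorElement_eq_one_iff_mul_comm,
        mem_center_iff.mp ha]
    have hbn : b ^ n ∈ center G := hker <| by rw [MonoidHom.mem_ker, map_pow, hb]
    exact (commute_pow_left_iff_commute_pow_right hab n).mpr (mem_center_iff.mp hbn a)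
  have hmap : (centralizer {a ^ n}).map f = ⊤ := by
    rw [eq_top_iff, ← hgen, closure_le, Set.insert_subset_iff]
    refine ⟨mem_map_of_mem f (mem_centralizer_singleton_iff.mpr (Commute.self_pow a n)), ?_⟩
    intro x hx
    obtain ⟨b, rfl⟩ := hf x
    exact mem_map_of_mem f (mem_centralizer_singleton_iff.mpr (hcomm b hx).symm)
  have htop : centralizer {a ^ n} = ⊤ := by
    rw [← comap_map_eq_self (hker.trans (center_le_centralizer _)), hmap, comap_top]
  simpa using centralizer_eq_top_iff_subset.mp htop

theorem pow_eq_one_of_quotient_center_mulEquiv (e : G ⧸ center G ≃* Γ) {x : Γ}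
    (hx : x ∈ center Γ) (hgen : closure (insert x {y | y ^ n = 1}) = ⊤) : x ^ n = 1 := by
  let f : G →* Γ := e.toMonoidHom.comp (QuotientGroup.mk' (center G))
  have hf : Function.Surjective f := e.surjective.comp (QuotientGroup.mk'_surjective _)
  have hker : f.ker = center G :=
    (MonoidHom.ker_mulEquiv_comp _ e).trans (QuotientGroup.ker_mk' _)
  obtain ⟨a, rfl⟩ := hf x
  have han := pow_mem_center_of_closure_eq_top hf hker.le hx hgen
  rwa [← hker, MonoidHom.mem_ker, map_pow] at han

end CentralExtension

section Pi

variable {ι : Type*} {A : ι → Type*} [∀ i, Group (A i)] {j : ι} {n : ℕ}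

theorem closure_insert_mulSingle_eq_top [DecidableEq ι] {g : A j} (hg : ∀ x, x ∈ zpowers g)
    (hA : ∀ i ≠ j, Monoid.exponent (A i) ∣ n) :
    closure (insert (Pi.mulSingle j g) {x : ∀ i, A i | x ^ n = 1}) = ⊤ := by
  refine eq_top_iff.mpr fun x _ => ?_
  obtain ⟨k, hk⟩ := mem_zpowers_iff.mp (hg (x j))
  have htorsion : (x * (Pi.mulSingle j g ^ k)⁻¹) ^ n = 1 := by
    funext i
    obtain rfl | hij := eq_or_ne i j
    · simp [hk]
    · simpa [hij] using Monoid.exponent_dvd_iff_forall_pow_eq_one.mp (hA i hij) (x i)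
  rw [← inv_mul_cancel_right x (Pi.mulSingle j g ^ k)]
  exact mul_mem (subset_closure (.inr htorsion)) (zpow_mem (subset_closure (.inl rfl)) k)

theorem isEmpty_quotient_center_mulEquiv_pi [IsCyclic (A j)]
    (hA : ∀ i ≠ j, Monoid.exponent (A i) ∣ n) (hj : ¬ Monoid.exponent (A j) ∣ n)
    (Δ : Type*) [Group Δ] : IsEmpty ((Δ ⧸ center Δ) ≃* ∀ i, A i) := by
  classical
  refine ⟨fun e => hj ?_⟩
  obtain ⟨g, hg⟩ := IsCyclic.exists_generator (α := A j)
  have hcentral : Pi.mulSingle j g ∈ center (∀ i, A i) := by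
    refine mem_center_iff.mpr fun x => funext fun i => ?_
    obtain rfl | hij := eq_or_ne i j
    · obtain ⟨k, hk⟩ := mem_zpowers_iff.mp (hg (x i))
      simpa [← hk] using (Commute.zpow_self g k).eq
    · simp [hij]
  have hpow := pow_eq_one_of_quotient_center_mulEquiv e hcentral
    (closure_insert_mulSingle_eq_top hg hA)
  rw [← Pi.mulSingle_pow, Pi.mulSingle_eq_one_iff] at hpow
  rwa [IsCyclic.exponent_eq_card, ← orderOf_eq_card_of_forall_mem_zpowers hg,
    orderOf_dvd_iff_pow_eq_one]

end Pi

theorem dvd_of_le_of_dvd_succ {M : Type*} [Monoid M] {m : ℕ} {d : Fin m → M}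
    (hd : ∀ i : Fin m, ∀ h : (i : ℕ) + 1 < m, d i ∣ d ⟨(i : ℕ) + 1, h⟩) {i j : Fin m}
    (hij : i ≤ j) : d i ∣ d j := by
  obtain ⟨j, hj⟩ := j
  change (i : ℕ) ≤ j at hij
  induction j, hij using Nat.le_induction with
  | base => exact dvd_rfl
  | succ j _ ih => exact (ih (by omega)).trans (hd ⟨j, by omega⟩ hj)

theorem stmt_14_general {ι : Type*} (d : ι → ℕ) {j : ι} {n : ℕ} (hd : ∀ i ≠ j, d i ∣ n)
    (hj : ¬ d j ∣ n) (Δ : Type*) [Group Δ] :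
    IsEmpty ((Δ ⧸ center Δ) ≃* Multiplicative (∀ i, ZMod (d i))) := by
  have hexp (i : ι) : Monoid.exponent (Multiplicative (ZMod (d i))) = d i := by
    rw [Monoid.exponent_multiplicative, ZMod.exponent]
  have := isEmpty_quotient_center_mulEquiv_pi (A := fun i => Multiplicative (ZMod (d i)))
    (by simpa only [hexp] using hd) (by simpa only [hexp] using hj) Δ
  exact ⟨fun e => this.false (e.trans (MulEquiv.piMultiplicative _))⟩

/-- A finite abelian group `ℤ/d₁ × ⋯ × ℤ/d_m` with `d₁ ∣ d₂ ∣ ⋯ ∣ d_m`, all `dᵢ ≥ 2`,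
`m ≥ 2` and `d_{m-1} < d_m` is incapable. -/
theorem stmt_14 (m : ℕ) (hm : 2 ≤ m) (d : Fin m → ℕ) (hd : ∀ i, 2 ≤ d i)
    (hchain : ∀ i : Fin m, ∀ h : (i : ℕ) + 1 < m, d i ∣ d ⟨(i : ℕ) + 1, h⟩)
    (hlt : d ⟨m - 2, by omega⟩ < d ⟨m - 1, by omega⟩)
    (Δ : Type*) [Group Δ] :
    IsEmpty ((Δ ⧸ Subgroup.center Δ) ≃* Multiplicative (∀ i : Fin m, ZMod (d i))) := by
  have hpen (i : Fin m) (hi : i ≠ ⟨m - 1, by omega⟩) : d i ∣ d ⟨m - 2, by omega⟩ :=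
    dvd_of_le_of_dvd_succ hchain (by simp only [Fin.le_def, ne_eq, Fin.ext_iff] at hi ⊢; omega)
  exact stmt_14_general d hpen (Nat.not_dvd_of_pos_of_lt (Nat.zero_lt_of_lt (hd _)) hlt) Δ
end

section
/- Let Γ be a countable group and ζ ∈ Z²(Γ,T) a normalised multiplier. If Γ has a ζ-representation which is both irreducible and projectively faithful, then the minisocle MS(Γ) has an irreducible Γ-P-faithful ζ-representation (with respect to the restriction of ζ to MS(Γ) × MS(Γ)). -/
/-!
Put `N = MS(Γ)`, a normal subgroup whose elements have finitely many conjugates in `Γ`. Let `A` be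
the C⋆-algebra generated by `π(N)`. A pure state of `A` (Krein–Milman), through the GNS
construction, gives an irreducible representation `ρ` of `A`, and `σ x = ρ (π x)` is an irreducible
`ζ`-representation of `N`, as `π(N)` generates `A`.

Let `x` be in the projective `Γ`-kernel of `σ`, with scalar `z`. Then `ρ = z` on the orbit `O` of
`π x` under conjugation by `π(Γ)`. This orbit is finite: `x` has finitely many conjugates, and the
value of `ρ` determines the phase of the operator over each of them. The operator
`∑ u ∈ O, (u - z)⋆ (u - z)` commutes with `π(Γ)`, so it is a scalar by Schur's lemma. It lies in `A`
and `ρ` sends it to `0`, so it is `0`. Hence `π x = z`, and `x = 1` by projective faithfulness.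
-/

section Schur

variable {ι H : Type*} [NormedAddCommGroup H] [InnerProductSpace ℂ H] [CompleteSpace H]
variable {π : ι → (H →L[ℂ] H)}

theorem IsIrreducibleRep.eq_zero_or_injective_of_commute (hπ : IsIrreducibleRep π)
    {T : H →L[ℂ] H} (hT : ∀ i, Commute (π i) T) : T = 0 ∨ Function.Injective T := by
  have hinv : ∀ i, ∀ v ∈ T.ker, π i v ∈ T.ker := fun i v hv ↦ by
    have : T (π i v) = π i (T v) := congr($((hT i).eq.symm) v)
    rw [LinearMap.mem_ker, ContinuousLinearMap.coe_coe, this, show T v = 0 from hv, map_zero]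
  refine (hπ T.ker T.isClosed_ker hinv).symm.imp (fun h ↦ ?_) LinearMap.ker_eq_bot.1
  ext v
  exact (h ▸ Submodule.mem_top : v ∈ T.ker)

theorem IsIrreducibleRep.nonneg_or_nonpos_of_commute (hπ : IsIrreducibleRep π)
    {T : H →L[ℂ] H} (hT : IsSelfAdjoint T) (hcomm : ∀ i, Commute (π i) T) : 0 ≤ T ∨ T ≤ 0 := by
  have hcomm_pos : ∀ i, Commute (π i) T⁺ := fun i ↦ ((hcomm i).symm.cfcₙ_real _).symm
  rcases hπ.eq_zero_or_injective_of_commute hcomm_pos with hpos | hinj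
  · exact .inr ((CFC.posPart_eq_zero_iff T).1 hpos)
  · refine .inl ((CFC.negPart_eq_zero_iff T).1 (ContinuousLinearMap.ext fun v ↦ hinj ?_))
    have hmul : T⁺ (T⁻ v) = 0 := congr($(CFC.posPart_mul_negPart T) v)
    rw [hmul, zero_apply, map_zero]

theorem IsIrreducibleRep.exists_eq_algebraMap_of_commute_s15 (hπ : IsIrreducibleRep π)
    {T : H →L[ℂ] H} (hT : IsSelfAdjoint T) (hcomm : ∀ i, Commute (π i) T) :
    ∃ r : ℝ, T = algebraMap ℝ (H →L[ℂ] H) r := by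
  have hsub : (spectrum ℝ T).Subsingleton := by
    rw [← Set.not_nontrivial_iff]
    intro hnontriv
    obtain ⟨a, ha, b, hb, hab⟩ := hnontriv.exists_lt
    set m := algebraMap ℝ (H →L[ℂ] H) ((a + b) / 2)
    have hm : ∀ i, Commute (π i) (T - m) := fun i ↦
      (hcomm i).sub_right (Algebra.commute_algebraMap_right _ _)
    rcases hπ.nonneg_or_nonpos_of_commute (hT.sub (.algebraMap _ (.all _))) hm with h | h
    · linarith [(algebraMap_le_iff_le_spectrum (a := T)).1 (sub_nonneg.1 h) a ha]
    · linarith [(le_algebraMap_iff_spectrum_le (a := T)).1 (sub_nonpos.1 h) b hb]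
  obtain ⟨r, hr⟩ : ∃ r, spectrum ℝ T ⊆ {r} :=
    hsub.eq_empty_or_singleton.elim (fun h ↦ ⟨0, h ▸ Set.empty_subset _⟩) fun ⟨r, h⟩ ↦ ⟨r, h.subset⟩
  exact ⟨r, CFC.eq_algebraMap_of_spectrum_subset_singleton T r hr⟩

theorem commute_sum_star_sub_mul_sub {A : Type*} [Ring A] [StarRing A] [Algebra ℂ A]
    {U : A} (hU : U ∈ unitary A) (O : Finset A) (hO : ∀ u ∈ O, U * u * star U ∈ O) (z : ℂ) :
    Commute U (∑ u ∈ O, star (u - algebraMap ℂ A z) * (u - algebraMap ℂ A z)) := by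
  set α := Unitary.conjStarAlgAut ℂ A ⟨U, hU⟩
  have hα : ∀ u, α u = U * u * star U := Unitary.conjStarAlgAut_apply ⟨U, hU⟩
  have hmaps : Set.MapsTo α O O := fun u hu ↦ hα u ▸ hO u hu
  have hsurj : Set.SurjOn α O O :=
    Finset.surjOn_of_injOn_of_card_le α hmaps α.injective.injOn le_rfl
  have hfix : α (∑ u ∈ O, star (u - algebraMap ℂ A z) * (u - algebraMap ℂ A z)) =
      ∑ u ∈ O, star (u - algebraMap ℂ A z) * (u - algebraMap ℂ A z) := by
    rw [map_sum]
    refine Finset.sum_nbij α hmaps α.injective.injOn hsurj fun u _ ↦ ?_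
    simp only [map_mul, map_star, map_sub, AlgHomClass.commutes]
  rw [hα] at hfix
  rw [commute_iff_eq, ← congr($hfix * U), mul_assoc _ (star U), Unitary.star_mul_self_of_mem hU,
    mul_one]

theorem IsIrreducibleRep.exists_sum_star_sub_mul_sub_eq_algebraMap (hπ : IsIrreducibleRep π)
    (hunit : ∀ i, π i ∈ unitary (H →L[ℂ] H)) (O : Finset (H →L[ℂ] H))
    (hO : ∀ i, ∀ u ∈ O, π i * u * star (π i) ∈ O) (z : ℂ) :
    ∃ r : ℝ, ∑ u ∈ O, star (u - algebraMap ℂ _ z) * (u - algebraMap ℂ _ z) =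
      algebraMap ℝ (H →L[ℂ] H) r :=
  hπ.exists_eq_algebraMap_of_commute_s15 (isSelfAdjoint_sum O fun _ _ ↦ .star_mul_self _)
    fun i ↦ commute_sum_star_sub_mul_sub (hunit i) O (hO i) z

theorem IsIrreducibleRep.eq_algebraMap_of_starAlgHom {B : Type*} [Ring B] [StarRing B]
    [Algebra ℂ B] [Nontrivial B] (hπ : IsIrreducibleRep π)
    (hunit : ∀ i, π i ∈ unitary (H →L[ℂ] H)) {S : StarSubalgebra ℂ (H →L[ℂ] H)}
    (ρ : S →⋆ₐ[ℂ] B) (O : Finset S)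
    (hO : ∀ i, ∀ u ∈ O, ∃ v ∈ O, (v : H →L[ℂ] H) = π i * u * star (π i)) {z : ℂ}
    (hz : ∀ u ∈ O, ρ u = algebraMap ℂ B z) : ∀ u ∈ O, u = algebraMap ℂ S z := by
  set R : S := ∑ u ∈ O, star (u - algebraMap ℂ S z) * (u - algebraMap ℂ S z)
  set O' : Finset (H →L[ℂ] H) := O.map (.subtype _)
  have hO' : ∀ i, ∀ w ∈ O', π i * w * star (π i) ∈ O' := fun i w hw ↦ by
    obtain ⟨u, hu, rfl⟩ := Finset.mem_map.1 hw
    obtain ⟨v, hv, h⟩ := hO i u hu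
    exact Finset.mem_map.2 ⟨v, hv, h⟩
  obtain ⟨r, hr⟩ := hπ.exists_sum_star_sub_mul_sub_eq_algebraMap hunit O' hO' z
  have hRr : R = algebraMap ℂ S r :=
    Subtype.ext (.trans (.trans (map_sum S.subtype _ O) (by rw [Finset.sum_map]; rfl)) hr)
  have hρR : ρ R = 0 := by
    rw [map_sum]
    refine Finset.sum_eq_zero fun u hu ↦ ?_
    rw [map_mul, map_sub, hz u hu, AlgHomClass.commutes, sub_self, mul_zero]
  have hr0 : r = 0 := by
    rw [hRr, AlgHomClass.commutes] at hρR
    exact_mod_cast (algebraMap ℂ B).injective (hρR.trans (map_zero _).symm)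
  rw [hr0, map_zero, Finset.sum_eq_zero_iff_of_nonneg fun _ _ ↦ star_mul_self_nonneg _] at hr
  refine fun u hu ↦ Subtype.ext (sub_eq_zero.1 ?_)
  exact CStarRing.star_mul_self_eq_zero_iff _ |>.1 (hr u (Finset.mem_map_of_mem _ hu))

end Schur

open scoped InnerProductSpace CStarAlgebra ComplexOrder

section StarProjection

variable {H : Type*} [NormedAddCommGroup H] [InnerProductSpace ℂ H] [CompleteSpace H]

theorem commute_starProjection_iff {L : Submodule ℂ H} [L.HasOrthogonalProjection]
    {T : H →L[ℂ] H} :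
    Commute L.starProjection T ↔ (∀ v ∈ L, T v ∈ L) ∧ ∀ v ∈ L, star T v ∈ L := by
  have hmem : ∀ {T : H →L[ℂ] H}, Commute L.starProjection T → ∀ v ∈ L, T v ∈ L :=
    fun {T} h v hv ↦ by
      have hTv : L.starProjection (T v) = T (L.starProjection v) := congr($(h.eq) v)
      rw [← L.starProjection_eq_self_iff, hTv, L.starProjection_eq_self_iff.2 hv]
  refine ⟨fun h ↦ ⟨hmem h, hmem ?_⟩, fun ⟨hT, hT'⟩ ↦ ?_⟩
  · exact (isSelfAdjoint_starProjection L).star_eq ▸ h.star_star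
  · rw [ContinuousLinearMap.IsIdempotentElem.commute_iff L.isIdempotentElem_starProjection,
      L.range_starProjection, L.ker_starProjection]
    exact ⟨hT, ContinuousLinearMap.orthogonal_mem_invtSubmodule hT'⟩

end StarProjection

section VectorFunctional

variable {A H : Type*} [CStarAlgebra A] [NormedAddCommGroup H] [InnerProductSpace ℂ H]
  [CompleteSpace H]

/-- The functional `a ↦ ⟪η, ρ a η⟫` on a C⋆-algebra given by a vector of a representation `ρ`. It
takes values in `WeakDual` because it is compared there with the extreme points of `stateSpace`. -/
noncomputable def vectorFunctional (ρ : A →⋆ₐ[ℂ] (H →L[ℂ] H)) (η : H) : WeakDual ℂ A :=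
  StrongDual.toWeakDual
    (innerSL ℂ η ∘L ContinuousLinearMap.apply ℂ H η ∘L ⟨ρ.toAlgHom.toLinearMap, map_continuous ρ⟩)

theorem vectorFunctional_apply (ρ : A →⋆ₐ[ℂ] (H →L[ℂ] H)) (η : H) (a : A) :
    vectorFunctional ρ η a = ⟪η, ρ a η⟫_ℂ :=
  rfl

theorem vectorFunctional_starProjection_apply (ρ : A →⋆ₐ[ℂ] (H →L[ℂ] H)) {p : H →L[ℂ] H}
    (hp : IsStarProjection p) (η : H) {a : A} (hpa : Commute p (ρ a)) :
    vectorFunctional ρ (p η) a = ⟪η, ρ a (p η)⟫_ℂ := by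
  have hmul : p * (ρ a * p) = ρ a * p := by
    rw [← mul_assoc, hpa.eq, mul_assoc, hp.isIdempotentElem]
  rw [vectorFunctional_apply, ← ContinuousLinearMap.adjoint_inner_right,
    ← ContinuousLinearMap.star_eq_adjoint, hp.isSelfAdjoint.star_eq]
  exact congr(⟪η, $hmul η⟫_ℂ)

theorem vectorFunctional_nonneg [PartialOrder A] [StarOrderedRing A]
    (ρ : A →⋆ₐ[ℂ] (H →L[ℂ] H)) (η : H) {a : A} (ha : 0 ≤ a) : 0 ≤ vectorFunctional ρ η a :=
  ((ContinuousLinearMap.nonneg_iff_isPositive _).1 (map_nonneg ρ ha)).inner_nonneg_right η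

theorem vectorFunctional_starProjection_le [PartialOrder A] [StarOrderedRing A]
    (ρ : A →⋆ₐ[ℂ] (H →L[ℂ] H)) {p : H →L[ℂ] H} (hp : IsStarProjection p) (η : H) {a : A}
    (hpa : Commute p (ρ a)) (ha : 0 ≤ a) : vectorFunctional ρ (p η) a ≤ vectorFunctional ρ η a := by
  have hcompl := vectorFunctional_starProjection_apply ρ hp.one_sub η
    ((Commute.one_left _).sub_left hpa)
  rw [sub_apply, one_apply_eq_self, map_sub, inner_sub_right,
    ← vectorFunctional_starProjection_apply ρ hp η hpa, ← vectorFunctional_apply] at hcompl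
  exact sub_nonneg.1 (hcompl ▸ vectorFunctional_nonneg ρ _ ha)

end VectorFunctional

section GNS

variable {A : Type*} [CStarAlgebra A] [PartialOrder A] [StarOrderedRing A]

/-- The canonical cyclic vector of the GNS representation of a positive functional: the class of
the unit. -/
noncomputable def gnsVector (f : A →ₚ[ℂ] ℂ) : f.GNS :=
  (f.toPreGNS 1 : f.PreGNS)

theorem gnsStarAlgHom_gnsVector (f : A →ₚ[ℂ] ℂ) (a : A) :
    f.gnsStarAlgHom a (gnsVector f) = (f.toPreGNS a : f.PreGNS) := by
  simp [gnsVector]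

theorem vectorFunctional_gnsVector_apply (f : A →ₚ[ℂ] ℂ) (a : A) :
    vectorFunctional f.gnsStarAlgHom (gnsVector f) a = f a := by
  rw [vectorFunctional_apply, gnsStarAlgHom_gnsVector, gnsVector, UniformSpace.Completion.inner_coe,
    f.preGNS_inner_def]
  simp

theorem denseRange_gnsStarAlgHom_gnsVector (f : A →ₚ[ℂ] ℂ) :
    DenseRange fun a ↦ f.gnsStarAlgHom a (gnsVector f) := by
  simp only [gnsStarAlgHom_gnsVector]
  exact UniformSpace.Completion.denseRange_coe.comp f.toPreGNS.surjective.denseRange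
    (UniformSpace.Completion.continuous_coe _)

theorem norm_gnsVector_mul_self (f : A →ₚ[ℂ] ℂ) : ‖gnsVector f‖ * ‖gnsVector f‖ = ‖f 1‖ := by
  rw [← vectorFunctional_gnsVector_apply, vectorFunctional_apply, map_one, one_apply_eq_self,
    inner_self_eq_norm_sq_to_K, norm_pow, RCLike.norm_ofReal, abs_norm, sq]

theorem norm_positiveLinearMap_apply_le (f : A →ₚ[ℂ] ℂ) (a : A) : ‖f a‖ ≤ ‖f 1‖ * ‖a‖ :=
  calc ‖f a‖ = ‖⟪gnsVector f, f.gnsStarAlgHom a (gnsVector f)⟫_ℂ‖ := by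
        rw [← vectorFunctional_apply, vectorFunctional_gnsVector_apply]
    _ ≤ ‖gnsVector f‖ * (‖a‖ * ‖gnsVector f‖) :=
        (norm_inner_le_norm _ _).trans <| by
          gcongr
          exact ContinuousLinearMap.le_of_opNorm_le _ (NonUnitalStarAlgHom.norm_apply_le _ a) _
    _ = ‖f 1‖ * ‖a‖ := by rw [← norm_gnsVector_mul_self]; ring

end GNS

section StateSpace

variable {A : Type*} [CStarAlgebra A] [PartialOrder A]

variable (A) in
/-- The state space of a unital C⋆-algebra, with the topology of pointwise convergence. -/
def stateSpace : Set (WeakDual ℂ A) :=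
  {φ | (∀ a, 0 ≤ a → 0 ≤ φ a) ∧ φ 1 = 1}

theorem inv_smul_mem_stateSpace {φ : WeakDual ℂ A} (hφ : ∀ a, 0 ≤ a → 0 ≤ φ a) {r : ℝ}
    (hr : 0 < r) (hφr : φ 1 = r) : r⁻¹ • φ ∈ stateSpace A := by
  refine ⟨fun a ha ↦ smul_nonneg (inv_pos.2 hr).le (hφ a ha), ?_⟩
  change r⁻¹ • φ 1 = 1
  rw [hφr, Complex.real_smul, ← Complex.ofReal_mul, inv_mul_cancel₀ hr.ne', Complex.ofReal_one]

variable [StarOrderedRing A]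

theorem norm_apply_le_of_forall_nonneg {φ : WeakDual ℂ A} (hφ : ∀ a, 0 ≤ a → 0 ≤ φ a) (a : A) :
    ‖φ a‖ ≤ ‖φ 1‖ * ‖a‖ :=
  norm_positiveLinearMap_apply_le (.mk₀ (WeakDual.toStrongDual φ).toLinearMap hφ) a

theorem eq_zero_of_forall_nonneg {φ : WeakDual ℂ A} (hφ : ∀ a, 0 ≤ a → 0 ≤ φ a) (h1 : φ 1 = 0) :
    φ = 0 :=
  DFunLike.ext _ _ fun a ↦ norm_le_zero_iff.1 <| by
    simpa [h1] using norm_apply_le_of_forall_nonneg hφ a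

theorem isCompact_stateSpace : IsCompact (stateSpace A) := by
  refine (WeakDual.isCompact_closedBall (0 : StrongDual ℂ A) 1).of_isClosed_subset ?_ ?_
  · have hclosed : IsClosed {φ : WeakDual ℂ A | ∀ a, 0 ≤ a → 0 ≤ φ a} := by
      simp only [Set.ofPred_forall]
      exact isClosed_iInter fun a ↦ isClosed_iInter fun _ ↦
        isClosed_le continuous_const (WeakDual.eval_continuous a)
    exact hclosed.inter (isClosed_eq (WeakDual.eval_continuous 1) continuous_const)
  · intro φ hφ
    rw [Set.mem_preimage, mem_closedBall_zero_iff]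
    exact ContinuousLinearMap.opNorm_le_bound _ zero_le_one fun a ↦ by
      simpa [hφ.2] using norm_apply_le_of_forall_nonneg hφ.1 a

theorem eq_smul_of_mem_extremePoints_stateSpace {φ ψ : WeakDual ℂ A}
    (hφ : φ ∈ (stateSpace A).extremePoints ℝ) (hψ : ∀ a, 0 ≤ a → 0 ≤ ψ a)
    (hle : ∀ a, 0 ≤ a → ψ a ≤ φ a) : ψ = ψ 1 • φ := by
  have hsub : ∀ a, 0 ≤ a → 0 ≤ (φ - ψ) a := fun a ha ↦ sub_nonneg.2 (hle a ha)
  obtain ⟨t, ht⟩ : ∃ t : ℝ, ψ 1 = t := ⟨_, Complex.eq_re_of_ofReal_le (hψ 1 zero_le_one)⟩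
  have ht' : (φ - ψ) 1 = (1 - t : ℝ) := by
    change φ 1 - ψ 1 = _
    rw [hφ.1.2, ht, Complex.ofReal_sub, Complex.ofReal_one]
  have ht0 : 0 ≤ t := Complex.zero_le_real.1 (ht ▸ hψ 1 zero_le_one)
  have ht1 : 0 ≤ 1 - t := Complex.zero_le_real.1 (ht' ▸ hsub 1 zero_le_one)
  rw [ht]
  rcases ht0.eq_or_lt with rfl | ht0
  · rw [eq_zero_of_forall_nonneg hψ ht, Complex.ofReal_zero, zero_smul]
  rcases ht1.eq_or_lt with h | ht1
  · rw [← h] at ht'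
    rw [← sub_eq_zero.1 (eq_zero_of_forall_nonneg hsub ht'), ← sub_eq_zero.1 h.symm,
      Complex.ofReal_one, one_smul]
  have hinv : t⁻¹ • ψ = φ := hφ.2 (inv_smul_mem_stateSpace hψ ht0 ht)
    (inv_smul_mem_stateSpace hsub ht1 ht') ⟨t, 1 - t, ht0, ht1, by ring,
      (congrArg₂ (· + ·) (smul_inv_smul₀ ht0.ne' ψ) (smul_inv_smul₀ ht1.ne' (φ - ψ))).trans
        (add_sub_cancel ψ φ)⟩
  rw [← hinv]
  exact (smul_inv_smul₀ ht0.ne' ψ).symm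

end StateSpace

section PureState

variable {A H : Type*} [CStarAlgebra A] [PartialOrder A] [StarOrderedRing A]
  [NormedAddCommGroup H] [InnerProductSpace ℂ H] [CompleteSpace H]

theorem exists_apply_eq_smul_of_mem_extremePoints (ρ : A →⋆ₐ[ℂ] (H →L[ℂ] H)) {ξ : H}
    (hcyc : DenseRange fun a ↦ ρ a ξ)
    (hext : vectorFunctional ρ ξ ∈ (stateSpace A).extremePoints ℝ) {p : H →L[ℂ] H}
    (hp : IsStarProjection p) (hcomm : ∀ a, Commute p (ρ a)) : ∃ t : ℂ, p ξ = t • ξ := by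
  set t := vectorFunctional ρ (p ξ) 1
  have hψ : vectorFunctional ρ (p ξ) = t • vectorFunctional ρ ξ :=
    eq_smul_of_mem_extremePoints_stateSpace hext (fun a ↦ vectorFunctional_nonneg ρ _)
      fun a ↦ vectorFunctional_starProjection_le ρ hp ξ (hcomm a)
  have horth : ∀ a, ⟪ρ a ξ, p ξ - t • ξ⟫_ℂ = 0 := fun a ↦ by
    have h : vectorFunctional ρ (p ξ) (star a) = t * ⟪ξ, ρ (star a) ξ⟫_ℂ :=
      congr($hψ (star a))
    rw [vectorFunctional_starProjection_apply ρ hp ξ (hcomm _), map_star,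
      ContinuousLinearMap.star_eq_adjoint, ContinuousLinearMap.adjoint_inner_right,
      ContinuousLinearMap.adjoint_inner_right] at h
    rw [inner_sub_right, inner_smul_right, h, sub_self]
  refine ⟨t, sub_eq_zero.1 (ext_inner_left ℂ fun v ↦ ?_)⟩
  rw [inner_zero_right]
  exact hcyc.induction_on v (isClosed_eq (by fun_prop) continuous_const) horth

theorem isIrreducibleRep_of_mem_extremePoints (ρ : A →⋆ₐ[ℂ] (H →L[ℂ] H)) {ξ : H}
    (hcyc : DenseRange fun a ↦ ρ a ξ)
    (hext : vectorFunctional ρ ξ ∈ (stateSpace A).extremePoints ℝ) : IsIrreducibleRep ρ := by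
  intro L hL hinv
  have : CompleteSpace L := hL.completeSpace_coe
  have hcomm : ∀ a, Commute L.starProjection (ρ a) := fun a ↦
    commute_starProjection_iff.2 ⟨hinv a, map_star ρ a ▸ hinv (star a)⟩
  obtain ⟨t, ht⟩ := exists_apply_eq_smul_of_mem_extremePoints ρ hcyc hext
    isStarProjection_starProjection hcomm
  rcases eq_or_ne t 0 with rfl | ht0
  · refine .inl (Submodule.starProjection_inj.1 (ContinuousLinearMap.ext fun v ↦ ?_))
    rw [Submodule.starProjection_bot, zero_apply]
    refine hcyc.induction_on v (isClosed_eq (by fun_prop) continuous_const) fun a ↦ ?_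
    have : L.starProjection (ρ a ξ) = ρ a (L.starProjection ξ) := congr($((hcomm a).eq) ξ)
    rw [this, ht, zero_smul, map_zero]
  · have hξ : ξ ∈ L := (L.smul_mem_iff ht0).1 (ht ▸ L.starProjection_apply_mem ξ)
    exact .inr (Submodule.eq_top_iff'.2 fun v ↦ hcyc.induction_on v hL fun a ↦ hinv a ξ hξ)

end PureState

theorem exists_isIrreducibleRep_starAlgHom.{u} {A : Type u} [CStarAlgebra A] {H : Type*}
    [NormedAddCommGroup H] [InnerProductSpace ℂ H] [CompleteSpace H] [Nontrivial H]
    (τ : A →⋆ₐ[ℂ] (H →L[ℂ] H)) :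
    ∃ (K : Type u) (_ : NormedAddCommGroup K) (_ : InnerProductSpace ℂ K) (_ : CompleteSpace K)
      (ρ : A →⋆ₐ[ℂ] (K →L[ℂ] K)), Nontrivial K ∧ IsIrreducibleRep ρ := by
  let _ := CStarAlgebra.spectralOrder A
  have _ := CStarAlgebra.spectralOrderedRing A
  have : LocallyConvexSpace ℝ (WeakDual ℂ A) :=
    inferInstanceAs (LocallyConvexSpace ℝ (WeakBilin (topDualPairing ℂ A)))
  have hne : (stateSpace A).Nonempty := by
    obtain ⟨η, hη⟩ := exists_ne (0 : H)
    refine ⟨_, inv_smul_mem_stateSpace (fun a ↦ vectorFunctional_nonneg τ η)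
      (show 0 < ‖η‖ ^ 2 by positivity) ?_⟩
    rw [vectorFunctional_apply, map_one, one_apply_eq_self, inner_self_eq_norm_sq_to_K]
    norm_cast
  obtain ⟨φ, hφ⟩ := isCompact_stateSpace.extremePoints_nonempty hne
  let f : A →ₚ[ℂ] ℂ := .mk₀ (WeakDual.toStrongDual φ).toLinearMap hφ.1.1
  have hf : vectorFunctional f.gnsStarAlgHom (gnsVector f) = φ :=
    DFunLike.ext _ _ (vectorFunctional_gnsVector_apply f)
  refine ⟨f.GNS, inferInstance, inferInstance, inferInstance, f.gnsStarAlgHom,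
    ⟨gnsVector f, 0, fun h ↦ ?_⟩, isIrreducibleRep_of_mem_extremePoints _
      (denseRange_gnsStarAlgHom_gnsVector f) (hf ▸ hφ)⟩
  have := hφ.1.2
  rw [← hf, h, vectorFunctional_apply, inner_zero_left] at this
  exact zero_ne_one this

section Generators

theorem eq_top_of_isClosed_of_forall_mem {A : Type*} [TopologicalSpace A] [Semiring A] [StarRing A]
    [Algebra ℂ A] [StarModule ℂ A] [IsTopologicalSemiring A] [ContinuousStar A] {s : Set A}
    {T : StarSubalgebra ℂ (StarAlgebra.adjoin ℂ s).topologicalClosure}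
    (hT : IsClosed (T : Set (StarAlgebra.adjoin ℂ s).topologicalClosure))
    (hs : ∀ a : (StarAlgebra.adjoin ℂ s).topologicalClosure, (a : A) ∈ s → a ∈ T) : T = ⊤ := by
  let S := (StarAlgebra.adjoin ℂ s).topologicalClosure
  have hsS : s ⊆ S := (StarAlgebra.subset_adjoin ℂ s).trans (StarSubalgebra.le_topologicalClosure _)
  have hle : S ≤ T.map S.subtype :=
    StarSubalgebra.topologicalClosure_minimal
      (StarAlgebra.adjoin_le fun a ha ↦ ⟨⟨a, hsS ha⟩, hs _ ha, rfl⟩)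
      ((StarSubalgebra.isClosed_topologicalClosure _).isClosedMap_subtype_val _ hT)
  refine eq_top_iff.2 fun a _ ↦ ?_
  obtain ⟨b, hb, hba⟩ := hle a.2
  exact Subtype.ext hba ▸ hb

variable {ι K : Type*} [NormedAddCommGroup K] [InnerProductSpace ℂ K] [CompleteSpace K]

theorem IsIrreducibleRep.restrict_generators {A : Type*} [CStarAlgebra A]
    {ρ : A →⋆ₐ[ℂ] (K →L[ℂ] K)} (hρ : IsIrreducibleRep ρ) {u : ι → A}
    (hu : ∀ i, ∃ j, star (u i) = u j)
    (hgen : ∀ T : StarSubalgebra ℂ A, IsClosed (T : Set A) → (∀ i, u i ∈ T) → T = ⊤) :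
    IsIrreducibleRep fun i ↦ ρ (u i) := by
  intro L hL hinv
  have : CompleteSpace L := hL.completeSpace_coe
  let T := (StarSubalgebra.centralizer ℂ {L.starProjection}).comap ρ
  have hmem : ∀ a, a ∈ T ↔ Commute L.starProjection (ρ a) := fun a ↦ by
    simp [T, StarSubalgebra.mem_centralizer_iff, commute_iff_eq,
      (isSelfAdjoint_starProjection L).star_eq]
  have hT : IsClosed (T : Set A) :=
    (Set.isClosed_centralizer _).preimage (map_continuous ρ)
  have htop : T = ⊤ := hgen T hT fun i ↦ by
    obtain ⟨j, hj⟩ := hu i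
    exact (hmem _).2 (commute_starProjection_iff.2 ⟨hinv i, by rw [← map_star, hj]; exact hinv j⟩)
  exact hρ L hL fun a ↦
    (commute_starProjection_iff.1 ((hmem a).1 (htop ▸ StarSubalgebra.mem_top))).1

theorem exists_starAlgHom_isIrreducibleRep_comp.{u} {H : Type u} [NormedAddCommGroup H]
    [InnerProductSpace ℂ H] [CompleteSpace H] [Nontrivial H] (u : ι → (H →L[ℂ] H))
    (hu : ∀ i, ∃ j, star (u i) = u j) :
    ∃ (S : StarSubalgebra ℂ (H →L[ℂ] H)) (hS : ∀ i, u i ∈ S)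
      (K : Type u) (_ : NormedAddCommGroup K) (_ : InnerProductSpace ℂ K) (_ : CompleteSpace K)
      (ρ : S →⋆ₐ[ℂ] (K →L[ℂ] K)), Nontrivial K ∧ IsIrreducibleRep fun i ↦ ρ ⟨u i, hS i⟩ := by
  let S := (StarAlgebra.adjoin ℂ (Set.range u)).topologicalClosure
  have hS : ∀ i, u i ∈ S := fun i ↦
    StarSubalgebra.le_topologicalClosure _ (StarAlgebra.subset_adjoin ℂ _ ⟨i, rfl⟩)
  have : IsClosed (S : Set (H →L[ℂ] H)) := StarSubalgebra.isClosed_topologicalClosure _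
  obtain ⟨K, _, _, _, ρ, hK, hρ⟩ := exists_isIrreducibleRep_starAlgHom S.subtype
  refine ⟨S, hS, K, _, _, _, ρ, hK, hρ.restrict_generators (u := fun i ↦ ⟨u i, hS i⟩)
    (fun i ↦ (hu i).imp fun _ ↦ Subtype.ext) fun T hT huT ↦ ?_⟩
  refine eq_top_of_isClosed_of_forall_mem hT ?_
  rintro ⟨_, _⟩ ⟨i, rfl⟩
  exact huT i

end Generators

section ZetaRep

variable {G H K : Type*} [Group G] [NormedAddCommGroup H] [InnerProductSpace ℂ H] [CompleteSpace H]
  [NormedAddCommGroup K] [InnerProductSpace ℂ K] [CompleteSpace K]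
variable {ζ : G → G → Circle} {π : G → (H →L[ℂ] H)} {N : Subgroup G}
  {S : StarSubalgebra ℂ (H →L[ℂ] H)}

theorem IsZetaRep.restrict (hπ : IsZetaRep ζ π) (N : Subgroup G) :
    IsZetaRepOn ζ N fun x ↦ π x :=
  ⟨fun x ↦ hπ.1 x, hπ.2.1, fun x y ↦ hπ.2.2 x y⟩

theorem IsZetaRepOn.starAlgHom_comp {σ : N → (H →L[ℂ] H)} (hσ : IsZetaRepOn ζ N σ)
    (hS : ∀ x, σ x ∈ S) (ρ : S →⋆ₐ[ℂ] (K →L[ℂ] K)) : IsZetaRepOn ζ N fun x ↦ ρ ⟨σ x, hS x⟩ := by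
  refine ⟨fun x ↦ Unitary.map_mem ρ ?_, ?_, fun x y ↦ ?_⟩
  · exact ⟨Subtype.ext (hσ.1 x).1, Subtype.ext (hσ.1 x).2⟩
  · exact (congrArg ρ (Subtype.ext hσ.2.1)).trans (map_one ρ)
  · rw [← map_mul, ← map_smul]
    exact congrArg ρ (Subtype.ext (hσ.2.2 x y))

theorem IsZetaRep.star_apply (hπ : IsZetaRep ζ π) (hnorm : IsNormalised ζ) (x : G) :
    star (π x) = π x⁻¹ := by
  have hmul : π x * π x⁻¹ = 1 := by
    rw [hπ.2.2, hnorm, mul_inv_cancel, hπ.2.1, Circle.coe_one, one_smul]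
  calc star (π x) = star (π x) * (π x * π x⁻¹) := by rw [hmul, mul_one]
    _ = π x⁻¹ := by rw [← mul_assoc, Unitary.star_mul_self_of_mem (hπ.1 x), one_mul]

theorem IsZetaRep.conj_apply (hπ : IsZetaRep ζ π) (hnorm : IsNormalised ζ) (g x : G) :
    π g * π x * star (π g) = ((ζ g x * ζ (g * x) g⁻¹ : Circle) : ℂ) • π (g * x * g⁻¹) := by
  rw [hπ.star_apply hnorm, hπ.2.2, smul_mul_assoc, hπ.2.2, smul_smul, Circle.coe_mul]

theorem IsZetaRep.conj_mul (hπ : IsZetaRep ζ π) (g h : G) (T : H →L[ℂ] H) :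
    π (g * h) * T * star (π (g * h)) = π g * (π h * T * star (π h)) * star (π g) := by
  have hscal : ((ζ g h : ℂ) * star (ζ g h : ℂ)) = 1 := by
    rw [Complex.star_def, ← Circle.coe_inv_eq_conj, ← Circle.coe_mul, mul_inv_cancel,
      Circle.coe_one]
  calc π (g * h) * T * star (π (g * h))
      = ((ζ g h : ℂ) * star (ζ g h : ℂ)) • (π (g * h) * T * star (π (g * h))) := by
        rw [hscal, one_smul]
    _ = ((ζ g h : ℂ) • π (g * h)) * T * star ((ζ g h : ℂ) • π (g * h)) := by
        rw [star_smul, smul_mul_assoc, smul_mul_assoc, mul_smul_comm, smul_smul]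
    _ = π g * (π h * T * star (π h)) * star (π g) := by
        rw [← hπ.2.2, star_mul]
        simp only [mul_assoc]

theorem IsZetaRep.conj_eq_smul_conj (hπ : IsZetaRep ζ π) (hnorm : IsNormalised ζ) {g h x : G}
    (hgh : g * x * g⁻¹ = h * x * h⁻¹) :
    ∃ c : ℂ, π g * π x * star (π g) = c • (π h * π x * star (π h)) := by
  refine ⟨(ζ g x * ζ (g * x) g⁻¹ / (ζ h x * ζ (h * x) h⁻¹) : Circle), ?_⟩
  rw [hπ.conj_apply hnorm, hπ.conj_apply hnorm, hgh, smul_smul, ← Circle.coe_mul, div_mul_cancel]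

theorem IsZetaRep.conj_mem [N.Normal] (hπ : IsZetaRep ζ π) (hnorm : IsNormalised ζ)
    (hS : ∀ x : N, π x ∈ S) (g : G) (x : N) : π g * π x * star (π g) ∈ S := by
  rw [hπ.conj_apply hnorm]
  exact S.smul_mem (hS ⟨_, ‹N.Normal›.conj_mem x x.2 g⟩) _

theorem IsZetaRep.conjRep_starAlgHom_comp [N.Normal] (hπ : IsZetaRep ζ π)
    (hnorm : IsNormalised ζ) (hS : ∀ x : N, π x ∈ S) (ρ : S →⋆ₐ[ℂ] (K →L[ℂ] K)) (g : G) (x : N) :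
    conjRep ζ N (fun y ↦ ρ ⟨π y, hS y⟩) g x =
      ρ ⟨π g * π x * star (π g), hπ.conj_mem hnorm hS g x⟩ := by
  rw [conjRep, dif_pos (‹N.Normal›.conj_mem x x.2 g), ← Circle.coe_mul, ← map_smul]
  exact congrArg ρ (Subtype.ext (hπ.conj_apply hnorm g x).symm)

theorem IsZetaRep.finite_range_conj {B : Type*} [Ring B] [StarRing B] [Algebra ℂ B] [Nontrivial B]
    (hπ : IsZetaRep ζ π) (hnorm : IsNormalised ζ) {x : G} (hx : (conjugatesOf x).Finite)
    (ρ : S →⋆ₐ[ℂ] B) (hS : ∀ g, π g * π x * star (π g) ∈ S) {z : ℂ} (hz0 : z ≠ 0)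
    (hz : ∀ g, ρ ⟨_, hS g⟩ = algebraMap ℂ B z) :
    (Set.range fun g ↦ (⟨_, hS g⟩ : S)).Finite := by
  -- Operators over the same conjugate of `x` are proportional, and having the same nonzero image
  -- under `ρ` they are equal.
  have hfactors : Function.FactorsThrough (fun g ↦ (⟨_, hS g⟩ : S)) fun g ↦ g * x * g⁻¹ := by
    intro g h hgh
    obtain ⟨c, hc⟩ := hπ.conj_eq_smul_conj hnorm hgh
    have hcS : (⟨_, hS g⟩ : S) = c • ⟨_, hS h⟩ := Subtype.ext hc
    have hρ : algebraMap ℂ B z = algebraMap ℂ B (c * z) := by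
      rw [← hz g, hcS, map_smul, hz h, map_mul, Algebra.smul_def]
    have hc1 : c = 1 := (mul_eq_right₀ hz0).1 ((algebraMap ℂ B).injective hρ).symm
    exact hcS.trans (by rw [hc1, one_smul])
  obtain ⟨e, he⟩ := (Function.factorsThrough_iff _).1 hfactors
  rw [he, Set.range_comp]
  refine (hx.subset ?_).image e
  rintro _ ⟨g, rfl⟩
  exact isConj_iff.2 ⟨g, rfl⟩

theorem IsZetaRep.apply_eq_smul_one_of_starAlgHom {B : Type*} [Ring B] [StarRing B] [Algebra ℂ B]
    [Nontrivial B] (hπ : IsZetaRep ζ π) (hnorm : IsNormalised ζ) (hirr : IsIrreducibleRep π)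
    {x : G} (hx : (conjugatesOf x).Finite) (ρ : S →⋆ₐ[ℂ] B)
    (hS : ∀ g, π g * π x * star (π g) ∈ S) {z : ℂ} (hz0 : z ≠ 0)
    (hz : ∀ g, ρ ⟨_, hS g⟩ = algebraMap ℂ B z) : π x = z • 1 := by
  have hfin := hπ.finite_range_conj hnorm hx ρ hS hz0 hz
  have hinv : ∀ g, ∀ u ∈ hfin.toFinset,
      ∃ v ∈ hfin.toFinset, (v : H →L[ℂ] H) = π g * u * star (π g) := by
    intro g u hu
    obtain ⟨h, rfl⟩ := hfin.mem_toFinset.1 hu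
    exact ⟨_, hfin.mem_toFinset.2 ⟨g * h, rfl⟩, hπ.conj_mul g h (π x)⟩
  have hscalar := hirr.eq_algebraMap_of_starAlgHom hπ.1 ρ hfin.toFinset hinv
    (fun u hu ↦ by obtain ⟨g, rfl⟩ := hfin.mem_toFinset.1 hu; exact hz g)
    ⟨_, hS 1⟩ (hfin.mem_toFinset.2 ⟨1, rfl⟩)
  simpa [hπ.2.1, Algebra.algebraMap_eq_smul_one] using congrArg Subtype.val hscalar

end ZetaRep

section FCCenter

variable {G : Type*} [Group G]

variable (G) in
/-- The FC-center of a group: the subgroup of the elements with finitely many conjugates. -/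
def fcCenter : Subgroup G where
  carrier := {x | (conjugatesOf x).Finite}
  one_mem' := (Set.finite_singleton 1).subset fun y hy ↦ isConj_one_right.1 hy
  mul_mem' {x y} hx hy := by
    refine (hx.mul hy).subset fun w hw ↦ ?_
    obtain ⟨g, rfl⟩ := isConj_iff.1 hw
    exact Set.mem_mul.2 ⟨_, isConj_iff.2 ⟨g, rfl⟩, _, isConj_iff.2 ⟨g, rfl⟩, conj_mul⟩
  inv_mem' {x} hx := by
    refine hx.inv.subset fun w hw ↦ ?_
    obtain ⟨g, rfl⟩ := isConj_iff.1 hw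
    exact isConj_iff.2 ⟨g, by rw [conj_inv, inv_inv]⟩

theorem mem_fcCenter_iff {x : G} : x ∈ fcCenter G ↔ (conjugatesOf x).Finite :=
  Iff.rfl

theorem le_fcCenter_of_finite (N : Subgroup G) [N.Normal] [Finite N] : N ≤ fcCenter G :=
  fun _ hx ↦ (Set.toFinite (N : Set G)).subset (Group.conjugates_subset_normal hx)

theorem minisocle_le_fcCenter : minisocle G ≤ fcCenter G :=
  iSup₂_le fun N ⟨_, _, _, _⟩ ↦ le_fcCenter_of_finite N

instance minisocle_normal : (minisocle G).Normal where
  conj_mem x hx g := by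
    have hle : minisocle G ≤ (minisocle G).comap (MulAut.conj g).toMonoidHom :=
      iSup₂_le fun N hN y hy ↦
        le_iSup₂ (f := fun (N : Subgroup G) (_ : IsFiniteFoot N) ↦ N) N hN (hN.1.conj_mem y hy g)
    exact hle hx

end FCCenter

theorem IsZetaRep.gammaPFaithful_starAlgHom_comp {G H K : Type*} [Group G] [NormedAddCommGroup H]
    [InnerProductSpace ℂ H] [CompleteSpace H] [NormedAddCommGroup K] [InnerProductSpace ℂ K]
    [CompleteSpace K] [Nontrivial K] {ζ : G → G → Circle} {π : G → (H →L[ℂ] H)}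
    (hπ : IsZetaRep ζ π) (hnorm : IsNormalised ζ) (hirr : IsIrreducibleRep π)
    (hfaith : PFaithful π) {N : Subgroup G} [N.Normal] (hN : N ≤ fcCenter G)
    {S : StarSubalgebra ℂ (H →L[ℂ] H)} (hS : ∀ x : N, π x ∈ S) (ρ : S →⋆ₐ[ℂ] (K →L[ℂ] K)) :
    GammaPFaithful ζ N fun x ↦ ρ ⟨π x, hS x⟩ := by
  rintro x ⟨z, hz⟩
  have hρ : ∀ g, ρ ⟨_, hπ.conj_mem hnorm hS g x⟩ = algebraMap ℂ (K →L[ℂ] K) z := fun g ↦ by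
    rw [← hπ.conjRep_starAlgHom_comp hnorm hS ρ, hz, Algebra.algebraMap_eq_smul_one]
  exact Subtype.ext (hfaith x ⟨z, hπ.apply_eq_smul_one_of_starAlgHom hnorm hirr
    (mem_fcCenter_iff.1 (hN x.2)) ρ _ z.coe_ne_zero hρ⟩)

theorem stmt_15_general.{u, v} (Γ : Type u) [Group Γ] (ζ : Γ → Γ → Circle)
    (hnorm : IsNormalised ζ) (N : Subgroup Γ) [N.Normal] (hN : N ≤ fcCenter Γ)
    (hex : ∃ (H : Type v) (_ : NormedAddCommGroup H) (_ : InnerProductSpace ℂ H)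
        (_ : CompleteSpace H) (π : Γ → (H →L[ℂ] H)),
        IsZetaRep ζ π ∧ IsIrreducibleRep π ∧ PFaithful π) :
    ∃ (H : Type v) (_ : NormedAddCommGroup H) (_ : InnerProductSpace ℂ H) (_ : CompleteSpace H)
      (σ : N → (H →L[ℂ] H)),
      IsZetaRepOn ζ N σ ∧ IsIrreducibleRep σ ∧ GammaPFaithful ζ N σ := by
  obtain ⟨H, _, _, _, π, hπ, hirr, hfaith⟩ := hex
  rcases subsingleton_or_nontrivial H with hH | hH
  · exact ⟨H, _, _, inferInstance, _, hπ.restrict N, fun _ _ _ ↦ .inl (Subsingleton.elim _ _),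
      fun x _ ↦ Subtype.ext (hfaith x ⟨1, Subsingleton.elim _ _⟩)⟩
  · obtain ⟨S, hS, K, _, _, _, ρ, hK, hρ⟩ :=
      exists_starAlgHom_isIrreducibleRep_comp (fun x : N ↦ π x)
        fun x ↦ ⟨x⁻¹, hπ.star_apply hnorm x⟩
    exact ⟨K, _, _, inferInstance, _, (hπ.restrict N).starAlgHom_comp hS ρ, hρ,
      hπ.gammaPFaithful_starAlgHom_comp hnorm hirr hfaith hN hS ρ⟩

/-- If a countable group Γ has an irreducible projectively faithful ζ-representation, then
the minisocle MS(Γ) has an irreducible Γ-P-faithful ζ-representation. -/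
theorem stmt_15 (Γ : Type) [Group Γ] [Countable Γ] (ζ : Γ → Γ → Circle)
    (hζ : IsMultiplier ζ) (hnorm : IsNormalised ζ)
    (hex : ∃ (H : Type) (_ : NormedAddCommGroup H) (_ : InnerProductSpace ℂ H)
        (_ : CompleteSpace H) (π : Γ → (H →L[ℂ] H)),
        IsZetaRep ζ π ∧ IsIrreducibleRep π ∧ PFaithful π) :
    ∃ (H : Type) (_ : NormedAddCommGroup H) (_ : InnerProductSpace ℂ H) (_ : CompleteSpace H)
      (σ : minisocle Γ → (H →L[ℂ] H)),
      IsZetaRepOn ζ (minisocle Γ) σ ∧ IsIrreducibleRep σ ∧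
        GammaPFaithful ζ (minisocle Γ) σ := by
  exact stmt_15_general Γ ζ hnorm (minisocle Γ) minisocle_le_fcCenter hex
end
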